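/- Fix 1 < p < ∞. There is a constant c = c(p) > 0 such that ‖∂_s v‖_{L^p(ℝ²)} + ‖∂_t ∂_t v‖_{L^p(ℝ²)} ≤ c ‖∂_s v − ∂_t∂_t v‖_{L^p(ℝ²)} for every v ∈ C_0^∞(ℝ²). -/

import Mathlib

/-!
The theorem is proved by the real-variable Calderón–Zygmund method, for a regularised kernel, so
that no principal value or Fourier transform is needed.

Let `kH` be the heat kernel multiplied by `exp (-1 / s)` (up to a constant). It is smooth and
bounded, the derivatives of `kK = ∂ₜ∂ₜ kH` decay at the rates of a parabolic singular kernel, and the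
heat operator sends `kH` to an integrable nonnegative function `kPsi`. The operator `T = conv kK` is
bounded on `L²`: for `u = kH * g`, integration by parts gives `∫ uₛ uₜₜ = 0`, hence
`‖uₜₜ‖₂ ≤ ‖uₛ - uₜₜ‖₂ = ‖kPsi * g‖₂ ≤ ‖kPsi‖₁ ‖g‖₂` (`lintegral_conv_kK_sq_le`). Since `kK` satisfies
Hörmander's condition for the parabolic scaling (`hormander`), a Calderón–Zygmund decomposition
along parabolic dyadic cubes (`exists_cz_cubes`, `exists_good`, `lintegral_conv_bad_le`) gives
`weak_estimate`, which integrates to the `Lᵖ` bound for `1 < p < 2`. The range `p > 2` follows by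
duality, since the transpose of `T` is `T` conjugated by a reflection (`strongType`).

Finally `T (∂ₛ v - ∂ₜ∂ₜ v) = kPsi * ∂ₜ∂ₜ v` (`conv_kK_heatOp`). Applying the `Lᵖ` bound to the
parabolic dilates of `v` bounds, with the same constant, the mollifications of `∂ₜ∂ₜ v` by all
dilates of `kPsi` (`mollified_bound`). Letting the scale tend to zero, Fatou's lemma bounds
`(∫ kPsi) • ∂ₜ∂ₜ v` (`lintegral_dTT_le`), where `∫ kPsi > 0`. The bound for `∂ₛ v` follows from the
triangle inequality.
-/

open MeasureTheory Set

noncomputable def dS13 (u : ℝ × ℝ → ℝ) : ℝ × ℝ → ℝ :=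
  fun p => deriv (fun σ => u (σ, p.2)) p.1

noncomputable def dT13 (u : ℝ × ℝ → ℝ) : ℝ × ℝ → ℝ :=
  fun p => deriv (fun τ => u (p.1, τ)) p.2

open scoped ENNReal

/-! ### Integration by parts and convolution on the plane -/

/-- The integral of a derivative vanishes, slice by slice in the first variable. -/
lemma integral_dS_eq_zero {G G' : ℝ × ℝ → ℝ}
    (hd : ∀ s t, HasDerivAt (fun σ => G (σ, t)) (G' (s, t)) s)
    (hG : Integrable G) (hG' : Integrable G') : ∫ q, G' q = 0 := by
  rw [Measure.volume_eq_prod] at *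
  rw [integral_prod_symm _ hG']
  have h1 := hG.prod_left_ae
  have h2 := hG'.prod_left_ae
  rw [← integral_zero ℝ ℝ]
  refine integral_congr_ae ?_
  filter_upwards [h1, h2] with t h1 h2
  exact integral_eq_zero_of_hasDerivAt_of_integrable (fun s => hd s t) h2 h1

lemma integral_dT_eq_zero {G G' : ℝ × ℝ → ℝ}
    (hd : ∀ s t, HasDerivAt (fun τ => G (s, τ)) (G' (s, t)) t)
    (hG : Integrable G) (hG' : Integrable G') : ∫ q, G' q = 0 := by
  rw [Measure.volume_eq_prod] at *
  rw [integral_prod _ hG']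
  have h1 := hG.prod_right_ae
  have h2 := hG'.prod_right_ae
  rw [← integral_zero ℝ ℝ]
  refine integral_congr_ae ?_
  filter_upwards [h1, h2] with s h1 h2
  exact integral_eq_zero_of_hasDerivAt_of_integrable (fun t => hd s t) h2 h1

/-- The convolution `F * g` on the plane. -/
noncomputable def conv (F g : ℝ × ℝ → ℝ) (x : ℝ × ℝ) : ℝ := ∫ y, F (x - y) * g y

lemma conv_integrable {F g : ℝ × ℝ → ℝ} (hF : Measurable F) {C : ℝ} (hC : ∀ x, |F x| ≤ C)
    (hg : Integrable g) (x : ℝ × ℝ) : Integrable (fun y => F (x - y) * g y) :=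
  hg.bdd_mul (c := C) (hF.comp (measurable_const.sub measurable_id)).aestronglyMeasurable
    (Filter.Eventually.of_forall fun _ => hC _)

lemma conv_measurable {F g : ℝ × ℝ → ℝ} (hF : Measurable F) (hg : Measurable g) :
    Measurable (conv F g) := by
  have : StronglyMeasurable (fun z : (ℝ × ℝ) × (ℝ × ℝ) => F (z.1 - z.2) * g z.2) :=
    ((hF.comp (measurable_fst.sub measurable_snd)).mul (hg.comp measurable_snd)).stronglyMeasurable
  exact this.integral_prod_right.measurable

lemma conv_hasDerivAt_s {F F' g : ℝ × ℝ → ℝ}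
    (hd : ∀ s t, HasDerivAt (fun σ => F (σ, t)) (F' (s, t)) s)
    (hF : Measurable F) (hF' : Measurable F') {C : ℝ} (hC : ∀ x, |F x| ≤ C)
    {C' : ℝ} (hC' : ∀ x, |F' x| ≤ C') (hg : Integrable g) (s t : ℝ) :
    HasDerivAt (fun σ => conv F g (σ, t)) (conv F' g (s, t)) s := by
  refine (hasDerivAt_integral_of_dominated_loc_of_deriv_le
    (F := fun σ y => F ((σ, t) - y) * g y) (F' := fun σ y => F' ((σ, t) - y) * g y)
    (bound := fun y => C' * |g y|) (s := univ) Filter.univ_mem ?_ ?_ ?_ ?_ ?_ ?_).2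
  · exact Filter.Eventually.of_forall fun σ => (conv_integrable hF hC hg _).aestronglyMeasurable
  · exact conv_integrable hF hC hg _
  · exact (conv_integrable hF' hC' hg _).aestronglyMeasurable
  · refine Filter.Eventually.of_forall fun y σ _ => ?_
    rw [norm_mul]
    exact mul_le_mul_of_nonneg_right (hC' _) (abs_nonneg _)
  · exact hg.abs.const_mul _
  · refine Filter.Eventually.of_forall fun y σ _ => ?_
    have := (hd (σ - y.1) (t - y.2)).comp_sub_const σ y.1
    exact this.mul_const (g y)

lemma conv_hasDerivAt_t {F F' g : ℝ × ℝ → ℝ}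
    (hd : ∀ s t, HasDerivAt (fun τ => F (s, τ)) (F' (s, t)) t)
    (hF : Measurable F) (hF' : Measurable F') {C : ℝ} (hC : ∀ x, |F x| ≤ C)
    {C' : ℝ} (hC' : ∀ x, |F' x| ≤ C') (hg : Integrable g) (s t : ℝ) :
    HasDerivAt (fun τ => conv F g (s, τ)) (conv F' g (s, t)) t := by
  refine (hasDerivAt_integral_of_dominated_loc_of_deriv_le
    (F := fun τ y => F ((s, τ) - y) * g y) (F' := fun τ y => F' ((s, τ) - y) * g y)
    (bound := fun y => C' * |g y|) (s := univ) Filter.univ_mem ?_ ?_ ?_ ?_ ?_ ?_).2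
  · exact Filter.Eventually.of_forall fun σ => (conv_integrable hF hC hg _).aestronglyMeasurable
  · exact conv_integrable hF hC hg _
  · exact (conv_integrable hF' hC' hg _).aestronglyMeasurable
  · refine Filter.Eventually.of_forall fun y σ _ => ?_
    rw [norm_mul]
    exact mul_le_mul_of_nonneg_right (hC' _) (abs_nonneg _)
  · exact hg.abs.const_mul _
  · refine Filter.Eventually.of_forall fun y τ _ => ?_
    have := (hd (s - y.1) (τ - y.2)).comp_sub_const τ y.2
    exact this.mul_const (g y)


/-- Young's inequality `L² * L¹ ⊆ L²`, for nonnegative functions. -/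
lemma lintegral_young {a b : ℝ × ℝ → ℝ≥0∞} (ha : Measurable a) (hb : Measurable b) :
    ∫⁻ x, (∫⁻ y, a (x - y) * b y) ^ (2 : ℝ) ≤ (∫⁻ y, b y) ^ (2 : ℝ) * ∫⁻ x, a x ^ (2 : ℝ) := by
  -- Cauchy–Schwarz for the measure `b y dy`, at a fixed `x`
  have key : ∀ x, (∫⁻ y, a (x - y) * b y) ^ (2 : ℝ)
      ≤ (∫⁻ y, b y) * ∫⁻ y, a (x - y) ^ (2 : ℝ) * b y := by
    intro x
    have hax : Measurable fun y => a (x - y) := ha.comp (measurable_const.sub measurable_id)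
    have h := ENNReal.lintegral_mul_le_Lp_mul_Lq volume Real.HolderConjugate.two_two
      (f := fun y => a (x - y) * b y ^ (1 / 2 : ℝ)) (g := fun y => b y ^ (1 / 2 : ℝ))
      (hax.mul (hb.pow_const _)).aemeasurable (hb.pow_const _).aemeasurable
    have e1 : ∀ y, (b y ^ (1 / 2 : ℝ)) ^ (2 : ℝ) = b y := fun y => by
      rw [← ENNReal.rpow_mul]; norm_num
    have e2 : ∀ y, b y ^ (1 / 2 : ℝ) * b y ^ (1 / 2 : ℝ) = b y := fun y => by
      rw [← ENNReal.rpow_add_of_nonneg _ _ (by norm_num) (by norm_num)]; norm_num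
    simp only [Pi.mul_apply, mul_assoc, e2, ENNReal.mul_rpow_of_nonneg _ _ zero_le_two, e1] at h
    refine (ENNReal.rpow_le_rpow h zero_le_two).trans_eq ?_
    rw [ENNReal.mul_rpow_of_nonneg _ _ zero_le_two, ← ENNReal.rpow_mul, ← ENNReal.rpow_mul]
    norm_num
    rw [mul_comm]
  have hm : Measurable fun z : (ℝ × ℝ) × (ℝ × ℝ) => a (z.1 - z.2) ^ (2 : ℝ) * b z.2 :=
    ((ha.comp (measurable_fst.sub measurable_snd)).pow_const _).mul (hb.comp measurable_snd)
  calc ∫⁻ x, (∫⁻ y, a (x - y) * b y) ^ (2 : ℝ)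
      ≤ ∫⁻ x, (∫⁻ y, b y) * ∫⁻ y, a (x - y) ^ (2 : ℝ) * b y := lintegral_mono key
    _ = (∫⁻ y, b y) * ∫⁻ x, ∫⁻ y, a (x - y) ^ (2 : ℝ) * b y :=
        lintegral_const_mul _ hm.lintegral_prod_right'
    _ = (∫⁻ y, b y) * ∫⁻ y, ∫⁻ x, a (x - y) ^ (2 : ℝ) * b y := by
        rw [lintegral_lintegral_swap hm.aemeasurable]
    _ = (∫⁻ y, b y) * ∫⁻ y, (∫⁻ x, a x ^ (2 : ℝ)) * b y := by
        congr 1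
        refine lintegral_congr fun y => ?_
        have hay : Measurable fun x => a (x - y) ^ (2 : ℝ) :=
          (ha.comp (measurable_id.sub measurable_const)).pow_const _
        rw [lintegral_mul_const _ hay,
          lintegral_sub_right_eq_self (fun x => a x ^ (2 : ℝ)) y]
    _ = _ := by
        rw [lintegral_const_mul _ hb, ENNReal.rpow_two]; ring

lemma enorm_conv_le (F g : ℝ × ℝ → ℝ) (x : ℝ × ℝ) :
    ‖conv F g x‖ₑ ≤ ∫⁻ y, ‖F (x - y)‖ₑ * ‖g y‖ₑ := by
  refine (enorm_integral_le_lintegral_enorm _).trans_eq ?_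
  simp only [enorm_mul]

lemma lintegral_conv_sq_le {F g : ℝ × ℝ → ℝ} (hF : Measurable F) (hg : Measurable g) :
    ∫⁻ x, ‖conv F g x‖ₑ ^ (2 : ℝ) ≤ (∫⁻ y, ‖g y‖ₑ) ^ (2 : ℝ) * ∫⁻ x, ‖F x‖ₑ ^ (2 : ℝ) :=
  (lintegral_mono fun x => ENNReal.rpow_le_rpow (enorm_conv_le F g x) zero_le_two).trans
    (lintegral_young hF.enorm hg.enorm)

lemma lintegral_conv_sq_le' {F g : ℝ × ℝ → ℝ} (hF : Measurable F) (hg : Measurable g) :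
    ∫⁻ x, ‖conv F g x‖ₑ ^ (2 : ℝ) ≤ (∫⁻ y, ‖F y‖ₑ) ^ (2 : ℝ) * ∫⁻ x, ‖g x‖ₑ ^ (2 : ℝ) := by
  refine (lintegral_mono fun x => ENNReal.rpow_le_rpow (enorm_conv_le F g x) zero_le_two).trans
    (le_trans (le_of_eq ?_) (lintegral_young hg.enorm hF.enorm))
  refine lintegral_congr fun x => ?_
  congr 1
  rw [← lintegral_sub_left_eq_self _ x]
  simp [mul_comm]

lemma memLp_two_of_lintegral {h : ℝ × ℝ → ℝ} (hm : Measurable h)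
    (hf : ∫⁻ x, ‖h x‖ₑ ^ (2 : ℝ) < ∞) : MemLp h 2 := by
  refine ⟨hm.aestronglyMeasurable, ?_⟩
  rw [eLpNorm_lt_top_iff_lintegral_rpow_enorm_lt_top (by norm_num) (by norm_num)]
  simpa using hf

lemma conv_memLp_two {F g : ℝ × ℝ → ℝ} (hF : Measurable F) (hg : Measurable g)
    (hF2 : ∫⁻ x, ‖F x‖ₑ ^ (2 : ℝ) < ∞) (hgi : Integrable g) : MemLp (conv F g) 2 :=
  memLp_two_of_lintegral (conv_measurable hF hg)
    ((lintegral_conv_sq_le hF hg).trans_lt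
      (ENNReal.mul_lt_top (ENNReal.rpow_lt_top_of_nonneg zero_le_two hgi.2.ne) hF2))

/-! ### The regularised heat kernel and its derivatives -/

/-- The parabolic size `1 + |s| + t²`. -/
noncomputable def pN (x : ℝ × ℝ) : ℝ := 1 + |x.1| + x.2 ^ 2

lemma one_le_pN (x : ℝ × ℝ) : 1 ≤ pN x := by
  have := abs_nonneg x.1
  have := sq_nonneg x.2
  unfold pN; linarith

lemma pN_pos (x : ℝ × ℝ) : 0 < pN x := zero_lt_one.trans_le (one_le_pN x)

lemma sq_le_pN (x : ℝ × ℝ) : x.2 ^ 2 ≤ pN x := by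
  have := abs_nonneg x.1
  unfold pN; linarith

lemma abs_le_pN (x : ℝ × ℝ) : |x.2| ≤ pN x ^ (1 / 2 : ℝ) := by
  rw [← Real.sqrt_eq_rpow]
  exact Real.abs_le_sqrt (sq_le_pN x)

lemma measurable_pN : Measurable pN := by unfold pN; fun_prop

/-- The functions `s ^ (-m) * exp (-(1 + t² / 4) / s)`, extended by zero to `s ≤ 0`. Up to a
constant, `m = 1 / 2` gives the heat kernel multiplied by the cutoff `exp (-1 / s)`. -/
noncomputable def hPhi (m : ℝ) (x : ℝ × ℝ) : ℝ :=
  if 0 < x.1 then x.1 ^ (-m) * Real.exp (-(1 + x.2 ^ 2 / 4) / x.1) else 0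

lemma hPhi_nonneg (m : ℝ) (x : ℝ × ℝ) : 0 ≤ hPhi m x := by
  unfold hPhi
  split_ifs with h
  · positivity
  · exact le_rfl

lemma measurable_hPhi (m : ℝ) : Measurable (hPhi m) := by
  unfold hPhi
  refine Measurable.ite (measurableSet_lt measurable_const measurable_fst) ?_ measurable_const
  fun_prop

/-- All kernels below are combinations of the `hPhi m`, whose parabolic decay is that of `pN ^ (-m)`. -/
lemma hPhi_le {m : ℝ} (h0 : 0 ≤ m) (h5 : m ≤ 5) (x : ℝ × ℝ) :
    hPhi m x ≤ 20 ^ 5 * pN x ^ (-m) := by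
  obtain ⟨s, t⟩ := x
  have hN := pN_pos (s, t)
  unfold hPhi
  split_ifs with h
  swap; · positivity
  simp only at h ⊢
  set c := 1 + t ^ 2 / 4 with hc
  have hc1 : 1 ≤ c := by rw [hc]; nlinarith [sq_nonneg t]
  set y := c / s with hy
  have hy0 : 0 < y := by positivity
  -- `pN ≤ s + 4 c = s (1 + 4 y)`, and powers of `1 + 4 y` are absorbed by `exp y`
  have hNle : pN (s, t) ≤ s * (1 + 4 * y) := by
    have : s * (1 + 4 * y) = s + 4 * c := by rw [hy]; field_simp
    rw [this, hc]; simp only [pN, abs_of_pos h]; linarith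
  have hexp : (1 + 4 * y) ^ m ≤ 20 ^ 5 * Real.exp y := by
    calc (1 + 4 * y) ^ m ≤ (1 + 4 * y) ^ (5 : ℝ) :=
          Real.rpow_le_rpow_of_exponent_le (by linarith) h5
      _ = (1 + 4 * y) ^ 5 := by rw [← Real.rpow_natCast]; norm_num
      _ ≤ (20 * (y / 5 + 1)) ^ 5 := by gcongr; linarith
      _ = 20 ^ 5 * (y / 5 + 1) ^ 5 := by rw [mul_pow]
      _ ≤ 20 ^ 5 * Real.exp (y / 5) ^ 5 := by
          gcongr; exact Real.add_one_le_exp _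
      _ = 20 ^ 5 * Real.exp y := by rw [← Real.exp_nat_mul]; congr 2; push_cast; ring
  have hmain : pN (s, t) ^ m ≤ s ^ m * (20 ^ 5 * Real.exp y) := by
    calc pN (s, t) ^ m ≤ (s * (1 + 4 * y)) ^ m := Real.rpow_le_rpow hN.le hNle h0
      _ = s ^ m * (1 + 4 * y) ^ m := Real.mul_rpow h.le (by linarith)
      _ ≤ _ := by gcongr
  have e : -c / s = -y := by rw [hy]; ring
  rw [e, Real.exp_neg, Real.rpow_neg h.le, Real.rpow_neg hN.le, ← div_eq_mul_inv, ← div_eq_mul_inv,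
    div_le_div_iff₀ (Real.exp_pos _) (by positivity), inv_mul_le_iff₀ (by positivity)]
  linarith

lemma hasDerivAt_hPhi_t (m s t : ℝ) :
    HasDerivAt (fun τ => hPhi m (s, τ)) (-(t / 2) * hPhi (m + 1) (s, t)) t := by
  unfold hPhi
  by_cases h : 0 < s
  · simp only [h, if_true]
    have h1 : HasDerivAt (fun τ : ℝ => -(1 + τ ^ 2 / 4) / s) (-(t / 2) / s) t := by
      have := ((((hasDerivAt_id t).pow 2).div_const 4).const_add 1).neg.div_const s
      refine this.congr_deriv ?_
      simp; ring
    refine (h1.exp.const_mul (s ^ (-m))).congr_deriv ?_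
    rw [neg_add m 1, Real.rpow_add h, Real.rpow_neg_one]
    field_simp
  · simp only [h, if_false, mul_zero]
    exact hasDerivAt_const t 0

lemma hasDerivAt_hPhi_s {m : ℝ} (h0 : 0 ≤ m) (h3 : m ≤ 3) (s t : ℝ) :
    HasDerivAt (fun σ => hPhi m (σ, t))
      (-m * hPhi (m + 1) (s, t) + (1 + t ^ 2 / 4) * hPhi (m + 2) (s, t)) s := by
  rcases lt_trichotomy s 0 with h | h | h
  · have e : (fun σ => hPhi m (σ, t)) =ᶠ[nhds s] fun _ => 0 := by
      filter_upwards [gt_mem_nhds h] with σ hσ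
      simp [hPhi, not_lt.2 (le_of_lt hσ)]
    have z : ∀ m', hPhi m' (s, t) = 0 := fun m' => by simp [hPhi, not_lt.2 h.le]
    rw [z, z]
    simpa using (hasDerivAt_const s (0 : ℝ)).congr_of_eventuallyEq e
  · subst h
    have z : ∀ m', hPhi m' (0, t) = 0 := fun m' => by simp [hPhi]
    rw [z, z]
    -- the function is `O(σ²)` at `0`
    have hO : (fun σ => hPhi m (σ, t)) =O[nhds 0] fun σ => ‖σ - 0‖ ^ 2 := by
      refine Asymptotics.IsBigO.of_bound (20 ^ 5) (Filter.Eventually.of_forall fun σ => ?_)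
      rw [Real.norm_of_nonneg (hPhi_nonneg _ _), Real.norm_of_nonneg (by positivity), sub_zero,
        Real.norm_eq_abs, sq_abs]
      by_cases hσ : 0 < σ
      · have e : hPhi m (σ, t) = σ ^ 2 * hPhi (m + 2) (σ, t) := by
          simp only [hPhi, hσ, if_true]
          rw [neg_add m 2, Real.rpow_add hσ, Real.rpow_neg hσ.le 2, Real.rpow_two]
          field_simp
        have b := hPhi_le (m := m + 2) (by linarith) (by linarith) (σ, t)
        have b1 : pN (σ, t) ^ (-(m + 2)) ≤ 1 :=
          Real.rpow_le_one_of_one_le_of_nonpos (one_le_pN _) (by linarith)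
        rw [e]
        nlinarith [sq_nonneg σ]
      · simp only [hPhi, hσ, if_false]; positivity
    have := hO.hasFDerivAt (𝕜 := ℝ) (by norm_num)
    simpa using this.hasDerivAt
  · have e : (fun σ => hPhi m (σ, t)) =ᶠ[nhds s]
        fun σ => σ ^ (-m) * Real.exp (-(1 + t ^ 2 / 4) / σ) := by
      filter_upwards [lt_mem_nhds h] with σ hσ
      simp [hPhi, hσ]
    have h1 : HasDerivAt (fun σ : ℝ => -(1 + t ^ 2 / 4) / σ) ((1 + t ^ 2 / 4) / s ^ 2) s := by
      refine ((hasDerivAt_inv h.ne').const_mul (-(1 + t ^ 2 / 4))).congr_deriv ?_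
      field_simp
    have h2 : HasDerivAt (fun σ : ℝ => σ ^ (-m)) (-m * s ^ (-m - 1)) s :=
      Real.hasDerivAt_rpow_const (Or.inl h.ne')
    refine ((h2.mul h1.exp).congr_of_eventuallyEq e).congr_deriv ?_
    simp only [hPhi, h, if_true]
    rw [neg_add m 1, Real.rpow_add h, neg_add m 2, Real.rpow_add h, Real.rpow_neg h.le 2,
      Real.rpow_two, sub_eq_add_neg (-m) 1, Real.rpow_add h]
    field_simp

/-- A factor `t` costs half a power of the parabolic size `pN`. -/
lemma abs_mul_hPhi_le {m : ℝ} (h0 : 0 ≤ m) (h5 : m ≤ 5) (j : ℕ) (x : ℝ × ℝ) :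
    |x.2| ^ j * hPhi m x ≤ 20 ^ 5 * pN x ^ (j / 2 - m) := by
  have hN := pN_pos x
  calc |x.2| ^ j * hPhi m x ≤ (pN x ^ (1 / 2 : ℝ)) ^ j * (20 ^ 5 * pN x ^ (-m)) := by
        gcongr
        · exact hPhi_nonneg _ _
        · exact abs_le_pN x
        · exact hPhi_le h0 h5 x
    _ = 20 ^ 5 * pN x ^ (j / 2 - m) := by
        rw [← Real.rpow_natCast, ← Real.rpow_mul hN.le, sub_eq_add_neg, Real.rpow_add hN]
        ring_nf

/-- The truncated heat kernel (without its normalising constant). -/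
noncomputable def kH : ℝ × ℝ → ℝ := hPhi (1 / 2)
/-- `∂_t kH`. -/
noncomputable def kHt (x : ℝ × ℝ) : ℝ := -(x.2 / 2) * hPhi (3 / 2) x
/-- `∂_s kH`. -/
noncomputable def kHs (x : ℝ × ℝ) : ℝ :=
  -(1 / 2) * hPhi (3 / 2) x + (1 + x.2 ^ 2 / 4) * hPhi (5 / 2) x
/-- The singular kernel `∂_t ∂_t kH`, regularised near the origin. -/
noncomputable def kK (x : ℝ × ℝ) : ℝ :=
  -(1 / 2) * hPhi (3 / 2) x + (x.2 ^ 2 / 4) * hPhi (5 / 2) x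
/-- `∂_s ∂_t kH`. -/
noncomputable def kHst (x : ℝ × ℝ) : ℝ :=
  (3 / 4 * x.2) * hPhi (5 / 2) x - (x.2 / 2) * (1 + x.2 ^ 2 / 4) * hPhi (7 / 2) x
/-- `∂_t kK`. -/
noncomputable def kKt (x : ℝ × ℝ) : ℝ :=
  (3 / 4 * x.2) * hPhi (5 / 2) x - (x.2 ^ 3 / 8) * hPhi (7 / 2) x
/-- `∂_s kK`. -/
noncomputable def kKs (x : ℝ × ℝ) : ℝ :=
  3 / 4 * hPhi (5 / 2) x - 1 / 2 * (1 + x.2 ^ 2 / 4) * hPhi (7 / 2) x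
    - 5 / 8 * x.2 ^ 2 * hPhi (7 / 2) x + x.2 ^ 2 / 4 * (1 + x.2 ^ 2 / 4) * hPhi (9 / 2) x
/-- The image of `kH` under the heat operator. -/
noncomputable def kPsi : ℝ × ℝ → ℝ := hPhi (5 / 2)

lemma kHs_sub_kK (x : ℝ × ℝ) : kHs x - kK x = kPsi x := by
  unfold kHs kK kPsi; ring

lemma measurable_kH : Measurable kH := measurable_hPhi _
lemma measurable_kPsi : Measurable kPsi := measurable_hPhi _
lemma measurable_kHt : Measurable kHt := by
  have := measurable_hPhi (3 / 2); unfold kHt; fun_prop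
lemma measurable_kHs : Measurable kHs := by
  have := measurable_hPhi (3 / 2); have := measurable_hPhi (5 / 2); unfold kHs; fun_prop
lemma measurable_kK : Measurable kK := by
  have := measurable_hPhi (3 / 2); have := measurable_hPhi (5 / 2); unfold kK; fun_prop
lemma measurable_kHst : Measurable kHst := by
  have := measurable_hPhi (5 / 2); have := measurable_hPhi (7 / 2); unfold kHst; fun_prop
lemma measurable_kKt : Measurable kKt := by
  have := measurable_hPhi (5 / 2); have := measurable_hPhi (7 / 2); unfold kKt; fun_prop
lemma measurable_kKs : Measurable kKs := by
  have := measurable_hPhi (5 / 2); have := measurable_hPhi (7 / 2)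
  have := measurable_hPhi (9 / 2); unfold kKs; fun_prop

lemma hasDerivAt_kH_t (s t : ℝ) : HasDerivAt (fun τ => kH (s, τ)) (kHt (s, t)) t := by
  refine (hasDerivAt_hPhi_t (1 / 2) s t).congr_deriv ?_
  norm_num [kHt]

lemma hasDerivAt_kH_s (s t : ℝ) : HasDerivAt (fun σ => kH (σ, t)) (kHs (s, t)) s := by
  refine (hasDerivAt_hPhi_s (m := 1 / 2) (by norm_num) (by norm_num) s t).congr_deriv ?_
  norm_num [kHs]

lemma hasDerivAt_kHt_t (s t : ℝ) : HasDerivAt (fun τ => kHt (s, τ)) (kK (s, t)) t := by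
  have h1 : HasDerivAt (fun τ : ℝ => -(τ / 2)) (-(1 / 2)) t := ((hasDerivAt_id t).div_const 2).neg
  refine (h1.mul (hasDerivAt_hPhi_t (3 / 2) s t)).congr_deriv ?_
  norm_num [kK]; ring

lemma hasDerivAt_kHt_s (s t : ℝ) : HasDerivAt (fun σ => kHt (σ, t)) (kHst (s, t)) s := by
  refine ((hasDerivAt_hPhi_s (m := 3 / 2) (by norm_num) (by norm_num) s t).const_mul
    (-(t / 2))).congr_deriv ?_
  norm_num [kHst]; ring

lemma hasDerivAt_kHs_t (s t : ℝ) : HasDerivAt (fun τ => kHs (s, τ)) (kHst (s, t)) t := by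
  have h1 : HasDerivAt (fun τ : ℝ => 1 + τ ^ 2 / 4) (t / 2) t := by
    refine (((hasDerivAt_id t).pow 2).div_const 4).const_add 1 |>.congr_deriv ?_
    simp; ring
  refine (((hasDerivAt_hPhi_t (3 / 2) s t).const_mul (-(1 / 2))).add
    (h1.mul (hasDerivAt_hPhi_t (5 / 2) s t))).congr_deriv ?_
  norm_num [kHst]; ring

lemma hasDerivAt_kHst_t (s t : ℝ) : HasDerivAt (fun τ => kHst (s, τ)) (kKs (s, t)) t := by
  have h1 : HasDerivAt (fun τ : ℝ => 3 / 4 * τ) (3 / 4) t := by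
    simpa using (hasDerivAt_id t).const_mul (3 / 4)
  have h2 : HasDerivAt (fun τ : ℝ => τ / 2 * (1 + τ ^ 2 / 4)) (1 / 2 + 3 / 8 * t ^ 2) t := by
    refine (((hasDerivAt_id t).div_const 2).mul
      ((((hasDerivAt_id t).pow 2).div_const 4).const_add 1)).congr_deriv ?_
    simp; ring
  refine ((h1.mul (hasDerivAt_hPhi_t (5 / 2) s t)).sub
    (h2.mul (hasDerivAt_hPhi_t (7 / 2) s t))).congr_deriv ?_
  norm_num [kKs]; ring

lemma hasDerivAt_kK_t (s t : ℝ) : HasDerivAt (fun τ => kK (s, τ)) (kKt (s, t)) t := by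
  have h1 : HasDerivAt (fun τ : ℝ => τ ^ 2 / 4) (t / 2) t := by
    refine (((hasDerivAt_id t).pow 2).div_const 4).congr_deriv ?_
    simp; ring
  refine (((hasDerivAt_hPhi_t (3 / 2) s t).const_mul (-(1 / 2))).add
    (h1.mul (hasDerivAt_hPhi_t (5 / 2) s t))).congr_deriv ?_
  norm_num [kKt]; ring

lemma hasDerivAt_kK_s (s t : ℝ) : HasDerivAt (fun σ => kK (σ, t)) (kKs (s, t)) s := by
  refine (((hasDerivAt_hPhi_s (m := 3 / 2) (by norm_num) (by norm_num) s t).const_mul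
    (-(1 / 2))).add
    ((hasDerivAt_hPhi_s (m := 5 / 2) (by norm_num) (by norm_num) s t).const_mul
      (t ^ 2 / 4))).congr_deriv ?_
  norm_num [kKs]; ring

/-- The common constant in the size bounds for the kernels. -/
noncomputable def kC : ℝ := 3 * 20 ^ 5

lemma kC_pos : 0 < kC := by unfold kC; positivity

lemma pN_rpow_mono (x : ℝ × ℝ) {a b : ℝ} (h : a ≤ b) : pN x ^ a ≤ pN x ^ b :=
  Real.rpow_le_rpow_of_exponent_le (one_le_pN x) h

lemma abs_kH_le (x : ℝ × ℝ) : |kH x| ≤ kC := by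
  have h := hPhi_le (m := 1 / 2) (by norm_num) (by norm_num) x
  have h1 : pN x ^ (-(1 / 2) : ℝ) ≤ 1 :=
    Real.rpow_le_one_of_one_le_of_nonpos (one_le_pN _) (by norm_num)
  unfold kH kC
  rw [abs_of_nonneg (hPhi_nonneg _ _)]
  linarith

lemma abs_kPsi_le (x : ℝ × ℝ) : |kPsi x| ≤ kC * pN x ^ (-2 : ℝ) := by
  have h := hPhi_le (m := 5 / 2) (by norm_num) (by norm_num) x
  have h1 : pN x ^ (-(5 / 2) : ℝ) ≤ pN x ^ (-2 : ℝ) := pN_rpow_mono x (by norm_num)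
  have := Real.rpow_nonneg (pN_pos x).le (-2)
  unfold kPsi kC
  rw [abs_of_nonneg (hPhi_nonneg _ _)]
  linarith

lemma abs_kHt_le (x : ℝ × ℝ) : |kHt x| ≤ kC * pN x ^ (-1 : ℝ) := by
  have h := abs_mul_hPhi_le (m := 3 / 2) (by norm_num) (by norm_num) 1 x
  have := Real.rpow_nonneg (pN_pos x).le (-1)
  norm_num at h
  unfold kHt kC
  rw [abs_mul, abs_of_nonneg (hPhi_nonneg _ _), abs_neg, abs_div, abs_two]
  linarith

lemma abs_kK_le (x : ℝ × ℝ) : |kK x| ≤ kC * pN x ^ (-1 : ℝ) := by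
  have h := abs_mul_hPhi_le (m := 3 / 2) (by norm_num) (by norm_num) 0 x
  have h2 := abs_mul_hPhi_le (m := 5 / 2) (by norm_num) (by norm_num) 2 x
  have h1 : pN x ^ (-(3 / 2) : ℝ) ≤ pN x ^ (-1 : ℝ) := pN_rpow_mono x (by norm_num)
  have := Real.rpow_nonneg (pN_pos x).le (-1)
  norm_num at h h2 h1
  have p1 := hPhi_nonneg (3 / 2) x
  have p2 := mul_nonneg (sq_nonneg x.2) (hPhi_nonneg (5 / 2) x)
  unfold kK kC
  rw [abs_le]
  constructor <;> linarith

lemma abs_kHs_le (x : ℝ × ℝ) : |kHs x| ≤ kC * pN x ^ (-1 : ℝ) := by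
  have h3 := abs_kK_le x
  have h := abs_mul_hPhi_le (m := 3 / 2) (by norm_num) (by norm_num) 0 x
  have h2 := abs_mul_hPhi_le (m := 5 / 2) (by norm_num) (by norm_num) 2 x
  have h4 := abs_mul_hPhi_le (m := 5 / 2) (by norm_num) (by norm_num) 0 x
  have h1 : pN x ^ (-(3 / 2) : ℝ) ≤ pN x ^ (-1 : ℝ) := pN_rpow_mono x (by norm_num)
  have h5 : pN x ^ (-(5 / 2) : ℝ) ≤ pN x ^ (-1 : ℝ) := pN_rpow_mono x (by norm_num)
  have := Real.rpow_nonneg (pN_pos x).le (-1)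
  norm_num at h h2 h1 h4 h5
  have p1 := hPhi_nonneg (3 / 2) x
  have p3 := hPhi_nonneg (5 / 2) x
  have p2 := mul_nonneg (sq_nonneg x.2) (hPhi_nonneg (5 / 2) x)
  unfold kHs kC
  rw [abs_le]
  constructor <;> linarith

lemma abs_kHst_le (x : ℝ × ℝ) : |kHst x| ≤ kC * pN x ^ (-1 : ℝ) := by
  have h := abs_mul_hPhi_le (m := 5 / 2) (by norm_num) (by norm_num) 1 x
  have h2 := abs_mul_hPhi_le (m := 7 / 2) (by norm_num) (by norm_num) 1 x
  have h3 := abs_mul_hPhi_le (m := 7 / 2) (by norm_num) (by norm_num) 3 x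
  have h1 : pN x ^ (-2 : ℝ) ≤ pN x ^ (-1 : ℝ) := pN_rpow_mono x (by norm_num)
  have h4 : pN x ^ (-3 : ℝ) ≤ pN x ^ (-1 : ℝ) := pN_rpow_mono x (by norm_num)
  have := Real.rpow_nonneg (pN_pos x).le (-1)
  norm_num at h h2 h3 h1 h4
  have e : |kHst x| ≤ 3 / 4 * (|x.2| * hPhi (5 / 2) x) + 1 / 2 * (|x.2| * hPhi (7 / 2) x)
      + 1 / 8 * (|x.2| ^ 3 * hPhi (7 / 2) x) := by
    unfold kHst
    refine (abs_sub _ _).trans ?_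
    have a1 : |(3 : ℝ) / 4| = 3 / 4 := abs_of_nonneg (by norm_num)
    have a2 : |x.2 / 2| = |x.2| / 2 := by rw [abs_div, abs_two]
    rw [abs_mul, abs_mul, abs_mul, abs_mul, abs_of_nonneg (hPhi_nonneg _ _),
      abs_of_nonneg (hPhi_nonneg _ _), abs_of_nonneg (by positivity : 0 ≤ 1 + x.2 ^ 2 / 4),
      a1, a2, ← sq_abs x.2]
    apply le_of_eq; ring
  unfold kC
  linarith

lemma abs_kKt_le (x : ℝ × ℝ) : |kKt x| ≤ kC * pN x ^ (-2 : ℝ) := by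
  have h := abs_mul_hPhi_le (m := 5 / 2) (by norm_num) (by norm_num) 1 x
  have h3 := abs_mul_hPhi_le (m := 7 / 2) (by norm_num) (by norm_num) 3 x
  have := pN_pos x
  have : 0 ≤ (pN x ^ 2)⁻¹ := by positivity
  norm_num at h h3
  have e : |kKt x| ≤ 3 / 4 * (|x.2| * hPhi (5 / 2) x)
      + 1 / 8 * (|x.2| ^ 3 * hPhi (7 / 2) x) := by
    unfold kKt
    refine (abs_sub _ _).trans ?_
    have a1 : |(3 : ℝ) / 4| = 3 / 4 := abs_of_nonneg (by norm_num)
    have a2 : |x.2 ^ 3 / 8| = |x.2| ^ 3 / 8 := by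
      rw [abs_div, abs_pow, abs_of_nonneg (by norm_num : (0 : ℝ) ≤ 8)]
    rw [abs_mul, abs_mul, abs_mul, abs_of_nonneg (hPhi_nonneg _ _),
      abs_of_nonneg (hPhi_nonneg _ _), a1, a2]
    apply le_of_eq; ring
  unfold kC
  norm_num
  linarith

lemma abs_kKs_le (x : ℝ × ℝ) : |kKs x| ≤ kC * pN x ^ (-(5 / 2) : ℝ) := by
  have h := abs_mul_hPhi_le (m := 5 / 2) (by norm_num) (by norm_num) 0 x
  have h2 := abs_mul_hPhi_le (m := 7 / 2) (by norm_num) (by norm_num) 2 x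
  have h3 := abs_mul_hPhi_le (m := 7 / 2) (by norm_num) (by norm_num) 0 x
  have h4 := abs_mul_hPhi_le (m := 9 / 2) (by norm_num) (by norm_num) 2 x
  have h5 := abs_mul_hPhi_le (m := 9 / 2) (by norm_num) (by norm_num) 4 x
  have h6 : pN x ^ (-(7 / 2) : ℝ) ≤ pN x ^ (-(5 / 2) : ℝ) := pN_rpow_mono x (by norm_num)
  have := Real.rpow_nonneg (pN_pos x).le (-(5 / 2))
  have p1 := hPhi_nonneg (5 / 2) x
  have p2 := hPhi_nonneg (7 / 2) x
  have p3 := hPhi_nonneg (9 / 2) x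
  norm_num at h h2 h3 h4 h5 h6 this
  have e5 : |x.2| ^ 4 = x.2 ^ 4 := by rw [← abs_pow]; exact abs_of_nonneg (by positivity)
  rw [e5] at h5
  have q2 : 0 ≤ x.2 ^ 2 * hPhi (7 / 2) x := by positivity
  have q4 : 0 ≤ x.2 ^ 2 * hPhi (9 / 2) x := by positivity
  have q5 : 0 ≤ x.2 ^ 4 * hPhi (9 / 2) x := by positivity
  unfold kKs kC
  norm_num
  rw [abs_le]
  constructor <;> linarith

/-! ### The `L²` bound -/

lemma integrable_inv_sq_one_add_abs : Integrable fun σ : ℝ => ((1 + |σ|) ^ 2)⁻¹ := by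
  have h := integrable_one_add_norm (E := ℝ) (μ := volume) (r := 2) (by simp)
  refine h.congr (Filter.Eventually.of_forall fun σ => ?_)
  have : 0 < 1 + ‖σ‖ := by positivity
  simp only [Real.norm_eq_abs] at this ⊢
  rw [Real.rpow_neg this.le, Real.rpow_two]

/-- The constant controlling the parabolic tail integrals. -/
noncomputable def kI : ℝ := (∫ σ : ℝ, ((1 + |σ|) ^ 2)⁻¹) * Real.pi

lemma lintegral_inv_sq_add_abs {A : ℝ} (hA : 0 < A) :
    ∫⁻ s : ℝ, ENNReal.ofReal (((A + |s|) ^ 2)⁻¹)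
      = ENNReal.ofReal ((∫ σ : ℝ, ((1 + |σ|) ^ 2)⁻¹) * A⁻¹) := by
  have e : (fun s : ℝ => ((A + |s|) ^ 2)⁻¹)
      = fun s => (A ^ 2)⁻¹ * ((1 + |A⁻¹ * s|) ^ 2)⁻¹ := by
    funext s
    rw [abs_mul, abs_of_pos (inv_pos.2 hA)]
    field_simp
  have hi : Integrable fun s : ℝ => ((A + |s|) ^ 2)⁻¹ := by
    rw [e]
    exact (integrable_inv_sq_one_add_abs.comp_mul_left' (inv_ne_zero hA.ne')).const_mul _
  rw [← ofReal_integral_eq_lintegral_ofReal hi (Filter.Eventually.of_forall fun s => by positivity),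
    e, integral_const_mul,
    Measure.integral_comp_mul_left (fun σ : ℝ => ((1 + |σ|) ^ 2)⁻¹) A⁻¹, inv_inv, abs_of_pos hA,
    smul_eq_mul]
  congr 1
  field_simp

lemma lintegral_inv_add_sq {h : ℝ} (hh : 0 < h) :
    ∫⁻ t : ℝ, ENNReal.ofReal ((h ^ 2 + t ^ 2)⁻¹) = ENNReal.ofReal (Real.pi * h⁻¹) := by
  have e : (fun t : ℝ => (h ^ 2 + t ^ 2)⁻¹)
      = fun t => (h ^ 2)⁻¹ * (1 + (h⁻¹ * t) ^ 2)⁻¹ := by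
    funext s
    field_simp
  have hi : Integrable fun t : ℝ => (h ^ 2 + t ^ 2)⁻¹ := by
    rw [e]
    exact (integrable_inv_one_add_sq.comp_mul_left' (inv_ne_zero hh.ne')).const_mul _
  rw [← ofReal_integral_eq_lintegral_ofReal hi (Filter.Eventually.of_forall fun s => by positivity),
    e, integral_const_mul,
    Measure.integral_comp_mul_left (fun σ : ℝ => (1 + σ ^ 2)⁻¹) h⁻¹, inv_inv, abs_of_pos hh,
    smul_eq_mul, integral_univ_inv_one_add_sq]
  congr 1
  field_simp

/-- Scale-invariant tail integral: `∫ h / (h² + |s| + t²)²` does not depend on `h`. -/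
lemma lintegral_tail {h : ℝ} (hh : 0 < h) :
    ∫⁻ x : ℝ × ℝ, ENNReal.ofReal (h * ((h ^ 2 + |x.1| + x.2 ^ 2) ^ 2)⁻¹) = ENNReal.ofReal kI := by
  have hJ : 0 ≤ ∫ σ : ℝ, ((1 + |σ|) ^ 2)⁻¹ := integral_nonneg fun σ => by positivity
  have hm : Measurable fun x : ℝ × ℝ =>
      ENNReal.ofReal (h * ((h ^ 2 + |x.1| + x.2 ^ 2) ^ 2)⁻¹) := by fun_prop
  rw [Measure.volume_eq_prod, lintegral_prod_symm _ hm.aemeasurable]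
  have : ∀ t : ℝ, ∫⁻ s : ℝ, ENNReal.ofReal (h * ((h ^ 2 + |s| + t ^ 2) ^ 2)⁻¹)
      = ENNReal.ofReal (h * ∫ σ : ℝ, ((1 + |σ|) ^ 2)⁻¹) * ENNReal.ofReal ((h ^ 2 + t ^ 2)⁻¹) := by
    intro t
    have hA : 0 < h ^ 2 + t ^ 2 := by positivity
    have e : ∀ s : ℝ, ENNReal.ofReal (h * ((h ^ 2 + |s| + t ^ 2) ^ 2)⁻¹)
        = ENNReal.ofReal h * ENNReal.ofReal (((h ^ 2 + t ^ 2 + |s|) ^ 2)⁻¹) := by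
      intro s
      rw [← ENNReal.ofReal_mul hh.le]; congr 4; ring
    simp only [e]
    rw [lintegral_const_mul _ (by fun_prop), lintegral_inv_sq_add_abs hA,
      ← ENNReal.ofReal_mul hh.le, ← ENNReal.ofReal_mul (by positivity)]
    congr 1; ring
  simp only [this]
  rw [lintegral_const_mul _ (by fun_prop), lintegral_inv_add_sq hh,
    ← ENNReal.ofReal_mul (by positivity)]
  congr 1
  unfold kI
  field_simp

lemma lintegral_pN_lt_top : ∫⁻ x, ENNReal.ofReal (pN x ^ (-2 : ℝ)) < ∞ := by
  have h := lintegral_tail one_pos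
  refine (le_of_eq ?_).trans_lt (h.trans_lt ENNReal.ofReal_lt_top)
  refine lintegral_congr fun x => ?_
  rw [Real.rpow_neg (pN_pos x).le, Real.rpow_two]
  simp [pN]

lemma lintegral_sq_lt_top_of_le {F : ℝ × ℝ → ℝ} (hF : ∀ x, |F x| ≤ kC * pN x ^ (-1 : ℝ)) :
    ∫⁻ x, ‖F x‖ₑ ^ (2 : ℝ) < ∞ := by
  calc ∫⁻ x, ‖F x‖ₑ ^ (2 : ℝ)
      ≤ ∫⁻ x, ENNReal.ofReal (kC ^ 2) * ENNReal.ofReal (pN x ^ (-2 : ℝ)) := by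
        refine lintegral_mono fun x => ?_
        rw [← ENNReal.ofReal_mul (by positivity), Real.enorm_eq_ofReal_abs,
          ENNReal.ofReal_rpow_of_nonneg (abs_nonneg _) zero_le_two]
        refine ENNReal.ofReal_le_ofReal ?_
        have := Real.rpow_le_rpow (abs_nonneg _) (hF x) zero_le_two
        refine this.trans_eq ?_
        rw [Real.rpow_two, mul_pow, ← Real.rpow_natCast (pN x ^ (-1 : ℝ)),
          ← Real.rpow_mul (pN_pos x).le]
        norm_num
    _ = ENNReal.ofReal (kC ^ 2) * ∫⁻ x, ENNReal.ofReal (pN x ^ (-2 : ℝ)) := by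
        have := measurable_pN
        exact lintegral_const_mul _ (by fun_prop)
    _ < ∞ := ENNReal.mul_lt_top ENNReal.ofReal_lt_top lintegral_pN_lt_top

/-- The `L¹` norm of `kPsi`. -/
noncomputable def kM : ℝ≥0∞ := ∫⁻ x, ‖kPsi x‖ₑ

lemma kM_lt_top : kM < ∞ := by
  calc kM ≤ ∫⁻ x, ENNReal.ofReal kC * ENNReal.ofReal (pN x ^ (-2 : ℝ)) := by
        refine lintegral_mono fun x => ?_
        rw [← ENNReal.ofReal_mul kC_pos.le, Real.enorm_eq_ofReal_abs]
        exact ENNReal.ofReal_le_ofReal (abs_kPsi_le x)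
    _ = ENNReal.ofReal kC * ∫⁻ x, ENNReal.ofReal (pN x ^ (-2 : ℝ)) := by
        have := measurable_pN
        exact lintegral_const_mul _ (by fun_prop)
    _ < ∞ := ENNReal.mul_lt_top ENNReal.ofReal_lt_top lintegral_pN_lt_top

lemma bdd_of_le {F : ℝ × ℝ → ℝ} (hF : ∀ x, |F x| ≤ kC * pN x ^ (-1 : ℝ)) (x : ℝ × ℝ) :
    |F x| ≤ kC := by
  have h1 : pN x ^ (-1 : ℝ) ≤ 1 :=
    Real.rpow_le_one_of_one_le_of_nonpos (one_le_pN _) (by norm_num)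
  have := hF x
  have := kC_pos
  nlinarith

lemma abs_kPsi_le' (x : ℝ × ℝ) : |kPsi x| ≤ kC * pN x ^ (-1 : ℝ) :=
  (abs_kPsi_le x).trans (mul_le_mul_of_nonneg_left (pN_rpow_mono x (by norm_num)) kC_pos.le)

lemma abs_kKt_le' (x : ℝ × ℝ) : |kKt x| ≤ kC * pN x ^ (-1 : ℝ) :=
  (abs_kKt_le x).trans (mul_le_mul_of_nonneg_left (pN_rpow_mono x (by norm_num)) kC_pos.le)

lemma abs_kKs_le' (x : ℝ × ℝ) : |kKs x| ≤ kC * pN x ^ (-1 : ℝ) :=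
  (abs_kKs_le x).trans (mul_le_mul_of_nonneg_left (pN_rpow_mono x (by norm_num)) kC_pos.le)

lemma lintegral_sq_eq {h : ℝ × ℝ → ℝ} (hh : MemLp h 2) :
    ∫⁻ x, ‖h x‖ₑ ^ (2 : ℝ) = ENNReal.ofReal (∫ x, h x * h x) := by
  have hi : Integrable fun x => h x * h x := hh.integrable_mul hh
  rw [ofReal_integral_eq_lintegral_ofReal hi (Filter.Eventually.of_forall fun x =>
    mul_self_nonneg _)]
  refine lintegral_congr fun x => ?_
  rw [Real.enorm_eq_ofReal_abs, ENNReal.ofReal_rpow_of_nonneg (abs_nonneg _) zero_le_two,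
    Real.rpow_two, sq_abs, sq]

/-- The `L²` bound for the regularised singular integral. With `u = kH * g`, integration by parts
gives `∫ u_s u_tt = -∫ u_st u_t = 0`, so that `‖u_tt‖² ≤ ‖u_s - u_tt‖² = ‖kPsi * g‖²`. -/
lemma lintegral_conv_kK_sq_le {g : ℝ × ℝ → ℝ} (hgm : Measurable g) (hg : Integrable g) :
    ∫⁻ x, ‖conv kK g x‖ₑ ^ (2 : ℝ) ≤ kM ^ (2 : ℝ) * ∫⁻ x, ‖g x‖ₑ ^ (2 : ℝ) := by
  refine le_trans ?_ (lintegral_conv_sq_le' measurable_kPsi hgm)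
  have mt := conv_memLp_two measurable_kHt hgm (lintegral_sq_lt_top_of_le abs_kHt_le) hg
  have ms := conv_memLp_two measurable_kHs hgm (lintegral_sq_lt_top_of_le abs_kHs_le) hg
  have mtt := conv_memLp_two measurable_kK hgm (lintegral_sq_lt_top_of_le abs_kK_le) hg
  have mst := conv_memLp_two measurable_kHst hgm (lintegral_sq_lt_top_of_le abs_kHst_le) hg
  have mp := conv_memLp_two measurable_kPsi hgm (lintegral_sq_lt_top_of_le abs_kPsi_le') hg
  have e0 : ∀ x, conv kPsi g x = conv kHs g x - conv kK g x := by
    intro x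
    unfold conv
    rw [← integral_sub (conv_integrable measurable_kHs (bdd_of_le abs_kHs_le) hg x)
      (conv_integrable measurable_kK (bdd_of_le abs_kK_le) hg x)]
    refine integral_congr_ae (Filter.Eventually.of_forall fun y => ?_)
    simp only [← kHs_sub_kK]; ring
  have e1 : ∫ q, (conv kHst g q * conv kHt g q + conv kHs g q * conv kK g q) = 0 := by
    refine integral_dT_eq_zero (G := fun q => conv kHs g q * conv kHt g q) (fun s t => ?_)
      (ms.integrable_mul mt) ((mst.integrable_mul mt).add (ms.integrable_mul mtt))
    exact (conv_hasDerivAt_t hasDerivAt_kHs_t measurable_kHs measurable_kHst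
      (bdd_of_le abs_kHs_le) (bdd_of_le abs_kHst_le) hg s t).mul
      (conv_hasDerivAt_t hasDerivAt_kHt_t measurable_kHt measurable_kK
      (bdd_of_le abs_kHt_le) (bdd_of_le abs_kK_le) hg s t)
  have e2 : ∫ q, (conv kHst g q * conv kHt g q + conv kHt g q * conv kHst g q) = 0 := by
    refine integral_dS_eq_zero (G := fun q => conv kHt g q * conv kHt g q) (fun s t => ?_)
      (mt.integrable_mul mt) ((mst.integrable_mul mt).add (mt.integrable_mul mst))
    have := conv_hasDerivAt_s hasDerivAt_kHt_s measurable_kHt measurable_kHst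
      (bdd_of_le abs_kHt_le) (bdd_of_le abs_kHst_le) hg s t
    exact this.mul this
  have i1 : Integrable fun q => conv kHst g q * conv kHt g q := mst.integrable_mul mt
  have i1' : Integrable fun q => conv kHt g q * conv kHst g q := mt.integrable_mul mst
  have i2 : Integrable fun q => conv kHs g q * conv kK g q := ms.integrable_mul mtt
  have i3 : Integrable fun q => conv kHs g q * conv kHs g q := ms.integrable_mul ms
  have i4 : Integrable fun q => conv kK g q * conv kK g q := mtt.integrable_mul mtt
  rw [integral_add i1 i2] at e1
  rw [integral_add i1 i1'] at e2
  simp only [mul_comm (conv kHt g _)] at e2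
  have e3 : ∫ q, conv kHs g q * conv kK g q = 0 := by linarith
  rw [lintegral_sq_eq mtt, lintegral_sq_eq mp]
  refine ENNReal.ofReal_le_ofReal ?_
  have e4 : ∫ x, conv kPsi g x * conv kPsi g x = (∫ x, conv kHs g x * conv kHs g x)
      - 2 * (∫ x, conv kHs g x * conv kK g x) + ∫ x, conv kK g x * conv kK g x := by
    have i5 : Integrable fun q => conv kHs g q * conv kHs g q - 2 * (conv kHs g q * conv kK g q) :=
      i3.sub (i2.const_mul 2)
    rw [← integral_const_mul, ← integral_sub i3 (i2.const_mul 2), ← integral_add i5 i4]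
    refine integral_congr_ae (Filter.Eventually.of_forall fun y => ?_)
    simp only [e0]; ring
  rw [e4, e3]
  have : 0 ≤ ∫ x, conv kHs g x * conv kHs g x := integral_nonneg fun x => mul_self_nonneg _
  linarith

/-! ### Hörmander's condition -/

/-- Away from the parabolic ball of radius comparable to `h`, moving a point by parabolic distance at
most `h` does not decrease its size by more than a constant factor. -/
lemma pN_ge_of_near {h : ℝ} {z z' : ℝ × ℝ} (hz : 8 * h ^ 2 ≤ |z.1| + z.2 ^ 2)
    (h1 : |z'.1 - z.1| ≤ h ^ 2) (h2 : |z'.2 - z.2| ≤ h) :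
    (h ^ 2 + |z.1| + z.2 ^ 2) / 5 ≤ pN z' ∧ h ^ 2 ≤ pN z' := by
  have a1 : |z.1| - h ^ 2 ≤ |z'.1| := by
    have := abs_sub_abs_le_abs_sub z.1 z'.1
    rw [abs_sub_comm] at this; linarith
  have a2 : (z'.2 - z.2) ^ 2 ≤ h ^ 2 := by
    rw [← sq_abs]; exact pow_le_pow_left₀ (abs_nonneg _) h2 2
  have a3 : z.2 ^ 2 / 2 - h ^ 2 ≤ z'.2 ^ 2 := by
    nlinarith [sq_nonneg (2 * z'.2 - z.2)]
  have := abs_nonneg z.1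
  have := sq_nonneg h
  unfold pN
  constructor <;> linarith

lemma deriv_bounds_near {h : ℝ} (hh : 0 < h) {z z' : ℝ × ℝ} (hz : 8 * h ^ 2 ≤ |z.1| + z.2 ^ 2)
    (h1 : |z'.1 - z.1| ≤ h ^ 2) (h2 : |z'.2 - z.2| ≤ h) :
    |kKs z'| * h ≤ 25 * kC * ((h ^ 2 + |z.1| + z.2 ^ 2) ^ 2)⁻¹ ∧
      |kKt z'| ≤ 25 * kC * ((h ^ 2 + |z.1| + z.2 ^ 2) ^ 2)⁻¹ := by
  obtain ⟨b1, b2⟩ := pN_ge_of_near hz h1 h2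
  have hC := kC_pos
  have hP := pN_pos z'
  set A := h ^ 2 + |z.1| + z.2 ^ 2 with hA
  have hA0 : 0 < A := by positivity
  have c2 : pN z' ^ (-2 : ℝ) ≤ 25 * (A ^ 2)⁻¹ := by
    rw [Real.rpow_neg hP.le, Real.rpow_two]
    calc (pN z' ^ 2)⁻¹ ≤ ((A / 5) ^ 2)⁻¹ := by gcongr
      _ = 25 * (A ^ 2)⁻¹ := by field_simp; norm_num
  have c1 : pN z' ^ (-(5 / 2) : ℝ) * h ≤ pN z' ^ (-2 : ℝ) := by
    have e : pN z' ^ (-2 : ℝ) = pN z' ^ (-(5 / 2) : ℝ) * pN z' ^ (1 / 2 : ℝ) := by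
      rw [← Real.rpow_add hP]; norm_num
    rw [e]
    gcongr
    rw [← Real.sqrt_eq_rpow]
    exact Real.le_sqrt_of_sq_le b2
  constructor
  · calc |kKs z'| * h ≤ kC * pN z' ^ (-(5 / 2) : ℝ) * h := by gcongr; exact abs_kKs_le z'
      _ = kC * (pN z' ^ (-(5 / 2) : ℝ) * h) := by ring
      _ ≤ kC * (25 * (A ^ 2)⁻¹) := mul_le_mul_of_nonneg_left (c1.trans c2) hC.le
      _ = _ := by ring
  · calc |kKt z'| ≤ kC * pN z' ^ (-2 : ℝ) := abs_kKt_le z'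
      _ ≤ kC * (25 * (A ^ 2)⁻¹) := by gcongr
      _ = _ := by ring

/-- Regularity of `kK`: the mean value inequality in each of the two variables, where an increment of
`h ^ 2` in the first variable is compensated by the better decay of `kKs`. -/
lemma kK_sub_le {h : ℝ} (hh : 0 < h) {z z' : ℝ × ℝ} (hz : 8 * h ^ 2 ≤ |z.1| + z.2 ^ 2)
    (h1 : |z'.1 - z.1| ≤ h ^ 2) (h2 : |z'.2 - z.2| ≤ h) :
    |kK z' - kK z| ≤ 50 * kC * (h * ((h ^ 2 + |z.1| + z.2 ^ 2) ^ 2)⁻¹) := by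
  have hC := kC_pos
  set B := 25 * kC * ((h ^ 2 + |z.1| + z.2 ^ 2) ^ 2)⁻¹ with hB
  have hB0 : 0 ≤ B := by positivity
  have m1 : ‖kK (z'.1, z'.2) - kK (z.1, z'.2)‖ ≤ B / h * ‖z'.1 - z.1‖ := by
    refine Convex.norm_image_sub_le_of_norm_hasDerivWithin_le (f := fun σ => kK (σ, z'.2))
      (f' := fun σ => kKs (σ, z'.2)) (s := Metric.closedBall z.1 (h ^ 2))
      (fun σ _ => (hasDerivAt_kK_s σ z'.2).hasDerivWithinAt) (fun σ hσ => ?_)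
      (convex_closedBall _ _) (Metric.mem_closedBall_self (by positivity))
      (by simpa [Real.dist_eq] using h1)
    rw [le_div_iff₀ hh]
    exact (deriv_bounds_near hh hz (z' := (σ, z'.2)) (by simpa [Real.dist_eq] using hσ) h2).1
  have m2 : ‖kK (z.1, z'.2) - kK (z.1, z.2)‖ ≤ B * ‖z'.2 - z.2‖ := by
    refine Convex.norm_image_sub_le_of_norm_hasDerivWithin_le (f := fun τ => kK (z.1, τ))
      (f' := fun τ => kKt (z.1, τ)) (s := Metric.closedBall z.2 h)
      (fun τ _ => (hasDerivAt_kK_t z.1 τ).hasDerivWithinAt) (fun τ hτ => ?_)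
      (convex_closedBall _ _) (Metric.mem_closedBall_self hh.le)
      (by simpa [Real.dist_eq] using h2)
    exact (deriv_bounds_near hh hz (z' := (z.1, τ)) (by simp; positivity)
      (by simpa [Real.dist_eq] using hτ)).2
  simp only [Real.norm_eq_abs, Prod.mk.eta] at m1 m2
  have m1' : B / h * |z'.1 - z.1| ≤ B * h := by
    calc B / h * |z'.1 - z.1| ≤ B / h * h ^ 2 := by gcongr
      _ = B * h := by field_simp
  have m2' : B * |z'.2 - z.2| ≤ B * h := by gcongr
  calc |kK z' - kK z| ≤ |kK z' - kK (z.1, z'.2)| + |kK (z.1, z'.2) - kK z| := abs_sub_le _ _ _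
    _ ≤ B * h + B * h := by linarith
    _ = _ := by rw [hB]; ring

/-- Hörmander's condition for the kernel `kK`, uniform over all scales `h`. -/
lemma hormander {h : ℝ} (hh : 0 < h) {c y : ℝ × ℝ} (h1 : |y.1 - c.1| ≤ h ^ 2)
    (h2 : |y.2 - c.2| ≤ h) :
    ∫⁻ x in {x : ℝ × ℝ | 8 * h ^ 2 ≤ |x.1 - c.1| + (x.2 - c.2) ^ 2}, ‖kK (x - y) - kK (x - c)‖ₑ
      ≤ ENNReal.ofReal (50 * kC * kI) := by
  have hC := kC_pos
  have hS : MeasurableSet {x : ℝ × ℝ | 8 * h ^ 2 ≤ |x.1 - c.1| + (x.2 - c.2) ^ 2} :=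
    measurableSet_le (by fun_prop) (by fun_prop)
  set φ : ℝ × ℝ → ℝ≥0∞ := fun z =>
    ENNReal.ofReal (h * ((h ^ 2 + |z.1| + z.2 ^ 2) ^ 2)⁻¹) with hφ
  have hφm : Measurable φ := by rw [hφ]; fun_prop
  calc ∫⁻ x in {x : ℝ × ℝ | 8 * h ^ 2 ≤ |x.1 - c.1| + (x.2 - c.2) ^ 2},
        ‖kK (x - y) - kK (x - c)‖ₑ
      ≤ ∫⁻ x in {x : ℝ × ℝ | 8 * h ^ 2 ≤ |x.1 - c.1| + (x.2 - c.2) ^ 2},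
        ENNReal.ofReal (50 * kC) * φ (x - c) := by
        refine setLIntegral_mono' hS fun x hx => ?_
        rw [Real.enorm_eq_ofReal_abs, hφ, ← ENNReal.ofReal_mul (by positivity)]
        refine ENNReal.ofReal_le_ofReal (kK_sub_le hh (by simpa using hx) ?_ ?_)
        · simpa [abs_sub_comm] using h1
        · simpa [abs_sub_comm] using h2
    _ ≤ ∫⁻ x, ENNReal.ofReal (50 * kC) * φ (x - c) := setLIntegral_le_lintegral _ _
    _ = ∫⁻ x, ENNReal.ofReal (50 * kC) * φ x :=
        lintegral_sub_right_eq_self (fun x => ENNReal.ofReal (50 * kC) * φ x) c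
    _ = ENNReal.ofReal (50 * kC * kI) := by
        rw [lintegral_const_mul _ hφm, hφ, lintegral_tail hh, ← ENNReal.ofReal_mul (by positivity)]

/-! ### Parabolic dyadic cubes -/

/-- The index of the parabolic dyadic cube of generation `n` that contains `x`: these cubes have
sides `4 ^ n` in the first variable and `2 ^ n` in the second. -/
noncomputable def dyIdx (n : ℤ) (x : ℝ × ℝ) : ℤ × ℤ × ℤ :=
  (n, ⌊x.1 / (4 : ℝ) ^ n⌋, ⌊x.2 / (2 : ℝ) ^ n⌋)

/-- The parabolic dyadic cube with index `i`; the first component of `i` is the generation. -/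
def dyQ (i : ℤ × ℤ × ℤ) : Set (ℝ × ℝ) := {x | dyIdx i.1 x = i}

/-- The lower corner of the cube `dyQ i`. -/
noncomputable def dyC (i : ℤ × ℤ × ℤ) : ℝ × ℝ :=
  (i.2.1 * (4 : ℝ) ^ i.1, i.2.2 * (2 : ℝ) ^ i.1)

lemma mem_dyQ_dyIdx (n : ℤ) (x : ℝ × ℝ) : x ∈ dyQ (dyIdx n x) := rfl

lemma dyQ_eq_prod (i : ℤ × ℤ × ℤ) :
    dyQ i = Ico (i.2.1 * (4 : ℝ) ^ i.1) ((i.2.1 + 1) * (4 : ℝ) ^ i.1) ×ˢ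
      Ico (i.2.2 * (2 : ℝ) ^ i.1) ((i.2.2 + 1) * (2 : ℝ) ^ i.1) := by
  obtain ⟨n, a, b⟩ := i
  have h4 : (0 : ℝ) < 4 ^ n := by positivity
  have h2 : (0 : ℝ) < 2 ^ n := by positivity
  ext x
  simp only [dyQ, dyIdx, mem_ofPred_eq, Prod.mk.injEq, true_and, Int.floor_eq_iff, mem_prod, mem_Ico,
    le_div_iff₀ h4, div_lt_iff₀ h4, le_div_iff₀ h2, div_lt_iff₀ h2]

lemma measurableSet_dyQ (i : ℤ × ℤ × ℤ) : MeasurableSet (dyQ i) := by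
  rw [dyQ_eq_prod]; exact measurableSet_Ico.prod measurableSet_Ico

lemma four_zpow (n : ℤ) : (4 : ℝ) ^ n = (2 ^ n) ^ 2 := by
  rw [show (4 : ℝ) = 2 ^ (2 : ℤ) by norm_num, ← zpow_mul, ← zpow_natCast, ← zpow_mul, mul_comm]
  rfl

lemma eight_zpow (n : ℤ) : (8 : ℝ) ^ n = (2 ^ n) ^ 3 := by
  rw [show (8 : ℝ) = 2 ^ (3 : ℤ) by norm_num, ← zpow_mul, ← zpow_natCast, ← zpow_mul, mul_comm]
  rfl

lemma volume_dyQ (i : ℤ × ℤ × ℤ) : volume (dyQ i) = ENNReal.ofReal (8 ^ i.1) := by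
  rw [dyQ_eq_prod, Measure.volume_eq_prod, Measure.prod_prod, Real.volume_Ico, Real.volume_Ico,
    ← ENNReal.ofReal_mul (by ring_nf; positivity), eight_zpow, four_zpow]
  congr 1; ring

lemma volume_dyQ_ne_zero (i : ℤ × ℤ × ℤ) : volume (dyQ i) ≠ 0 := by
  rw [volume_dyQ]; simp only [ne_eq, ENNReal.ofReal_eq_zero, not_le]; positivity

lemma volume_dyQ_ne_top (i : ℤ × ℤ × ℤ) : volume (dyQ i) ≠ ∞ := by
  rw [volume_dyQ]; exact ENNReal.ofReal_ne_top

lemma dyC_mem (i : ℤ × ℤ × ℤ) : dyC i ∈ dyQ i := by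
  rw [dyQ_eq_prod]
  have h4 : (0 : ℝ) < 4 ^ i.1 := by positivity
  have h2 : (0 : ℝ) < 2 ^ i.1 := by positivity
  simp only [dyC, mem_prod, mem_Ico]
  refine ⟨⟨le_rfl, ?_⟩, le_rfl, ?_⟩ <;> nlinarith

lemma abs_sub_of_mem_dyQ {i : ℤ × ℤ × ℤ} {x y : ℝ × ℝ} (hx : x ∈ dyQ i) (hy : y ∈ dyQ i) :
    |x.1 - y.1| ≤ (2 ^ i.1) ^ 2 ∧ |x.2 - y.2| ≤ 2 ^ i.1 := by
  rw [dyQ_eq_prod] at hx hy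
  simp only [mem_prod, mem_Ico] at hx hy
  rw [← four_zpow]
  constructor <;> rw [abs_le] <;> constructor <;> linarith [hx.1.1, hx.1.2, hx.2.1, hx.2.2,
    hy.1.1, hy.1.2, hy.2.1, hy.2.2]

lemma dyIdx_succ_eq {n : ℤ} {x y : ℝ × ℝ} (h : dyIdx n x = dyIdx n y) :
    dyIdx (n + 1) x = dyIdx (n + 1) y := by
  simp only [dyIdx, Prod.mk.injEq, true_and] at h ⊢
  have key : ∀ (k : ℕ) (a b : ℝ), 0 < k → ⌊a / (k : ℝ) ^ n⌋ = ⌊b / (k : ℝ) ^ n⌋ →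
      ⌊a / (k : ℝ) ^ (n + 1)⌋ = ⌊b / (k : ℝ) ^ (n + 1)⌋ := by
    intro k a b hk hab
    have hk' : (k : ℝ) ≠ 0 := by positivity
    rw [zpow_add_one₀ hk', ← div_div, ← div_div, Int.floor_div_natCast, Int.floor_div_natCast, hab]
  exact ⟨by exact_mod_cast key 4 x.1 y.1 (by norm_num) (by exact_mod_cast h.1),
    by exact_mod_cast key 2 x.2 y.2 (by norm_num) (by exact_mod_cast h.2)⟩

lemma dyIdx_eq_of_le {n m : ℤ} (hnm : n ≤ m) {x y : ℝ × ℝ} (h : dyIdx n x = dyIdx n y) :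
    dyIdx m x = dyIdx m y := by
  induction m, hnm using Int.leInduction with
  | base => exact h
  | succ m _ ih => exact dyIdx_succ_eq ih

/-- Calderón–Zygmund selection: the maximal dyadic cubes on which the mean of `|f|` exceeds `l`. -/
lemma exists_cz_cubes {f : ℝ × ℝ → ℝ} (hf : Continuous f) (hfi : Integrable f) {l : ℝ}
    (hl : 0 < l) :
    ∃ S : Set (ℤ × ℤ × ℤ), S.PairwiseDisjoint dyQ ∧
      (∀ i ∈ S, ENNReal.ofReal l * volume (dyQ i) < ∫⁻ x in dyQ i, ‖f x‖ₑ) ∧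
      (∀ i ∈ S, ∫⁻ x in dyQ i, ‖f x‖ₑ ≤ 8 * ENNReal.ofReal l * volume (dyQ i)) ∧
      ∀ x, (∀ i ∈ S, x ∉ dyQ i) → |f x| ≤ l := by
  set heavy : ℤ × ℤ × ℤ → Prop := fun i =>
    ENNReal.ofReal l * volume (dyQ i) < ∫⁻ x in dyQ i, ‖f x‖ₑ with hheavy
  have hbdd : ∃ B : ℤ, ∀ i, heavy i → i.1 ≤ B := by
    set N := ∫ x, ‖f x‖ with hN
    obtain ⟨B, hB⟩ := pow_unbounded_of_one_lt (N / l) (show (1 : ℝ) < 8 by norm_num)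
    refine ⟨B, fun i hi => ?_⟩
    by_contra! hlt
    have h1 : (8 : ℝ) ^ B ≤ 8 ^ i.1 := by
      rw [← zpow_natCast]; exact zpow_le_zpow_right₀ (by norm_num) hlt.le
    have h2 : N ≤ l * 8 ^ i.1 := by
      rw [div_lt_iff₀ hl] at hB; nlinarith
    refine absurd hi (not_lt.2 ?_)
    rw [volume_dyQ, ← ENNReal.ofReal_mul hl.le]
    refine (setLIntegral_le_lintegral _ _).trans ?_
    rw [← ofReal_integral_norm_eq_lintegral_enorm hfi]
    exact ENNReal.ofReal_le_ofReal h2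
  obtain ⟨B, hB⟩ := hbdd
  refine ⟨{i | heavy i ∧ ∀ x ∈ dyQ i, ∀ m > i.1, ¬ heavy (dyIdx m x)}, ?_, fun i hi => hi.1, ?_, ?_⟩
  · intro i hi j hj hij
    rw [Function.onFun, Set.disjoint_left]
    intro x hxi hxj
    rcases lt_trichotomy i.1 j.1 with h | h | h
    · exact hi.2 x hxi _ h (by rw [show dyIdx j.1 x = j from hxj]; exact hj.1)
    · have e1 : dyIdx i.1 x = i := hxi
      have e2 : dyIdx j.1 x = j := hxj
      exact hij (by rw [← e1, ← e2, h])
    · exact hj.2 x hxj _ h (by rw [show dyIdx i.1 x = i from hxi]; exact hi.1)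
  · intro i hi
    have hn := hi.2 _ (dyC_mem i) (i.1 + 1) (by simp)
    simp only [hheavy, not_lt] at hn
    have hsub : dyQ i ⊆ dyQ (dyIdx (i.1 + 1) (dyC i)) := fun x hx =>
      dyIdx_succ_eq (hx.trans (dyC_mem i).symm)
    refine (lintegral_mono_set hsub).trans (hn.trans_eq ?_)
    have e8 : (8 : ℝ≥0∞) = ENNReal.ofReal 8 := by norm_num
    rw [volume_dyQ, volume_dyQ, e8, ← ENNReal.ofReal_mul hl.le, ← ENNReal.ofReal_mul (by norm_num),
      ← ENNReal.ofReal_mul (by positivity)]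
    simp only [dyIdx]
    rw [zpow_add_one₀ (by norm_num)]
    congr 1; ring
  · intro x hx
    by_contra! hlt
    -- at a point with `l < |f x|` all small cubes are heavy, so some maximal cube contains it
    obtain ⟨l', h1, h2⟩ := exists_between hlt
    obtain ⟨δ, hδ, hball⟩ := Metric.continuous_iff.1 hf.abs x (|f x| - l') (by linarith)
    obtain ⟨k, hk⟩ := exists_pow_lt_of_lt_one (lt_min hδ one_pos) (show (2⁻¹ : ℝ) < 1 by norm_num)
    have hk' : (2 : ℝ) ^ (-(k : ℤ)) < min δ 1 := by
      rw [zpow_neg, zpow_natCast, ← inv_pow]; exact hk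
    have hsub : ∀ y ∈ dyQ (dyIdx (-k) x), l' ≤ |f y| := by
      intro y hy
      obtain ⟨b1, b2⟩ := abs_sub_of_mem_dyQ hy (mem_dyQ_dyIdx (-k) x)
      simp only [dyIdx] at b1 b2
      have hp : (0 : ℝ) < 2 ^ (-(k : ℤ)) := by positivity
      have hmin := lt_min_iff.1 hk'
      have hb := hball y (by
        rw [Prod.dist_eq, Real.dist_eq, Real.dist_eq]
        exact max_lt (by nlinarith) (by linarith))
      rw [Real.dist_eq, abs_lt] at hb
      linarith
    have hh : heavy (dyIdx (-k) x) := by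
      have hl' : 0 < l' := hl.trans h1
      calc ENNReal.ofReal l * volume (dyQ (dyIdx (-k) x))
          < ENNReal.ofReal l' * volume (dyQ (dyIdx (-k) x)) :=
            ENNReal.mul_lt_mul_left (volume_dyQ_ne_zero _) (volume_dyQ_ne_top _)
              ((ENNReal.ofReal_lt_ofReal_iff hl').2 h1)
        _ = ∫⁻ y in dyQ (dyIdx (-k) x), ENNReal.ofReal l' := by rw [setLIntegral_const]
        _ ≤ ∫⁻ y in dyQ (dyIdx (-k) x), ‖f y‖ₑ := by
            refine setLIntegral_mono' (measurableSet_dyQ _) fun y hy => ?_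
            rw [Real.enorm_eq_ofReal_abs]
            exact ENNReal.ofReal_le_ofReal (hsub y hy)
    obtain ⟨m, hm, hmax⟩ := Int.exists_greatest_of_bdd (P := fun m => heavy (dyIdx m x))
      ⟨B, fun m hm => hB _ hm⟩ ⟨_, hh⟩
    refine hx (dyIdx m x) ⟨hm, fun y hy m' hm' hbad => ?_⟩ (mem_dyQ_dyIdx m x)
    have : dyIdx m' y = dyIdx m' x := dyIdx_eq_of_le (le_of_lt hm') hy
    rw [this] at hbad
    exact absurd (hmax m' hbad) (not_le.2 hm')

/-! ### The Calderón–Zygmund decomposition -/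

/-- The parabolic dilate of the cube `dyQ i` outside which Hörmander's condition is used. -/
def dyStar (i : ℤ × ℤ × ℤ) : Set (ℝ × ℝ) :=
  {x | |x.1 - (dyC i).1| + (x.2 - (dyC i).2) ^ 2 < 8 * (2 ^ i.1) ^ 2}

lemma measurableSet_dyStar (i : ℤ × ℤ × ℤ) : MeasurableSet (dyStar i) :=
  measurableSet_lt (by fun_prop) (by fun_prop)

lemma volume_dyStar_le (i : ℤ × ℤ × ℤ) : volume (dyStar i) ≤ 96 * volume (dyQ i) := by
  set c := dyC i
  set h : ℝ := 2 ^ i.1 with hh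
  have h0 : 0 < h := by positivity
  have hsub : dyStar i ⊆ Icc (c.1 - 8 * h ^ 2) (c.1 + 8 * h ^ 2) ×ˢ Icc (c.2 - 3 * h) (c.2 + 3 * h) := by
    intro x hx
    have hx' : |x.1 - c.1| + (x.2 - c.2) ^ 2 < 8 * h ^ 2 := hx
    have a1 := abs_le.1 (show |x.1 - c.1| ≤ 8 * h ^ 2 by nlinarith [sq_nonneg (x.2 - c.2)])
    have a2 := abs_le.1 (show |x.2 - c.2| ≤ 3 * h from
      abs_le_of_sq_le_sq (by nlinarith [abs_nonneg (x.1 - c.1)]) (by positivity))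
    exact ⟨⟨by linarith, by linarith⟩, ⟨by linarith, by linarith⟩⟩
  refine (measure_mono hsub).trans_eq ?_
  have e96 : (96 : ℝ≥0∞) = ENNReal.ofReal 96 := by norm_num
  rw [volume_dyQ, Measure.volume_eq_prod, Measure.prod_prod, Real.volume_Icc, Real.volume_Icc,
    ← ENNReal.ofReal_mul (by ring_nf; positivity), e96, ← ENNReal.ofReal_mul (by norm_num),
    eight_zpow]
  congr 1; ring

/-- The good function of the Calderón–Zygmund decomposition: `f` off the selected cubes, and the
mean of `f` on each of them. -/
lemma exists_good {f : ℝ × ℝ → ℝ} (hf : Measurable f) {S : Set (ℤ × ℤ × ℤ)}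
    (hS : S.PairwiseDisjoint dyQ) :
    ∃ g : ℝ × ℝ → ℝ, Measurable g ∧ (∀ x ∉ ⋃ i : S, dyQ i, g x = f x) ∧
      ∀ i : S, ∀ x ∈ dyQ i, g x = ⨍ y in dyQ i, f y := by
  obtain ⟨g, hg, hgi⟩ := exists_measurable_piecewise (ι := Option S)
    (fun o => o.elim (⋃ i : S, dyQ i)ᶜ (fun i => dyQ i))
    (by
      rintro (_ | i)
      · exact (MeasurableSet.iUnion fun i => measurableSet_dyQ _).compl
      · exact measurableSet_dyQ _)
    (fun o => o.elim f (fun i _ => ⨍ y in dyQ i, f y))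
    (by
      rintro (_ | i)
      · exact hf
      · exact measurable_const)
    (by
      rintro (_ | i) (_ | j) hij x ⟨hx, hx'⟩
      · rfl
      · exact absurd (mem_iUnion.2 ⟨j, hx'⟩) hx
      · exact absurd (mem_iUnion.2 ⟨i, hx⟩) hx'
      · have hne : (i : ℤ × ℤ × ℤ) ≠ j := fun h => hij (by rw [Subtype.ext h])
        exact absurd hx' (Set.disjoint_left.1 (hS i.2 j.2 hne) hx))
  exact ⟨g, hg, fun x hx => hgi none hx, fun i x hx => hgi (some i) hx⟩

lemma measurable_kK_sub_mul {b : ℝ × ℝ → ℝ} (hb : Measurable b) (c : ℝ × ℝ) :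
    Measurable fun z : (ℝ × ℝ) × (ℝ × ℝ) => ‖kK (z.1 - z.2) - kK (z.1 - c)‖ₑ * ‖b z.2‖ₑ := by
  have := measurable_kK
  fun_prop

/-- The bad part: off the dilated cubes its image is controlled in `L¹`, by cancellation on each
cube and Hörmander's condition. -/
lemma lintegral_conv_bad_le {b : ℝ × ℝ → ℝ} (hb : Measurable b) (hbi : Integrable b)
    {S : Set (ℤ × ℤ × ℤ)} (hS : S.PairwiseDisjoint dyQ) (h0 : ∀ x ∉ ⋃ i : S, dyQ i, b x = 0)
    (hm : ∀ i : S, ∫ y in dyQ i, b y = 0) :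
    ∫⁻ x in (⋃ i : S, dyStar i)ᶜ, ‖conv kK b x‖ₑ
      ≤ ENNReal.ofReal (50 * kC * kI) * ∑' i : S, ∫⁻ y in dyQ i, ‖b y‖ₑ := by
  have hd : Pairwise (Function.onFun Disjoint fun i : S => dyQ i) := fun i j hij =>
    hS i.2 j.2 fun h => hij (Subtype.ext h)
  have hQ : ∀ i : S, MeasurableSet (dyQ i) := fun i => measurableSet_dyQ _
  have hbound := bdd_of_le abs_kK_le
  have key : ∀ x, ‖conv kK b x‖ₑ
      ≤ ∑' i : S, ∫⁻ y in dyQ i, ‖kK (x - y) - kK (x - dyC i)‖ₑ * ‖b y‖ₑ := by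
    intro x
    have hi := conv_integrable measurable_kK hbound hbi x
    have e : conv kK b x = ∑' i : S, ∫ y in dyQ i, (kK (x - y) - kK (x - dyC i)) * b y := by
      rw [conv, ← setIntegral_eq_integral_of_forall_compl_eq_zero (s := ⋃ i : S, dyQ i)
        (fun y hy => by rw [h0 y hy, mul_zero]), integral_iUnion hQ hd hi.integrableOn]
      refine tsum_congr fun i => ?_
      simp_rw [sub_mul]
      rw [integral_sub hi.integrableOn (hbi.const_mul _).integrableOn, integral_const_mul, hm i,
        mul_zero, sub_zero]
    rw [e]
    refine enorm_tsum_le_tsum_enorm.trans (ENNReal.tsum_le_tsum fun i => ?_)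
    refine (enorm_integral_le_lintegral_enorm _).trans_eq ?_
    simp only [enorm_mul]
  calc ∫⁻ x in (⋃ i : S, dyStar i)ᶜ, ‖conv kK b x‖ₑ
      ≤ ∫⁻ x in (⋃ i : S, dyStar i)ᶜ,
          ∑' i : S, ∫⁻ y in dyQ i, ‖kK (x - y) - kK (x - dyC i)‖ₑ * ‖b y‖ₑ := lintegral_mono key
    _ = ∑' i : S, ∫⁻ x in (⋃ i : S, dyStar i)ᶜ,
          ∫⁻ y in dyQ i, ‖kK (x - y) - kK (x - dyC i)‖ₑ * ‖b y‖ₑ :=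
        lintegral_tsum fun i => (measurable_kK_sub_mul hb _).lintegral_prod_right'.aemeasurable
    _ ≤ ∑' i : S, ENNReal.ofReal (50 * kC * kI) * ∫⁻ y in dyQ i, ‖b y‖ₑ := by
        refine ENNReal.tsum_le_tsum fun i => ?_
        rw [lintegral_lintegral_swap (measurable_kK_sub_mul hb _).aemeasurable,
          ← lintegral_const_mul _ hb.enorm]
        refine setLIntegral_mono' (hQ i) fun y hy => ?_
        have hmk : Measurable fun x => ‖kK (x - y) - kK (x - dyC i)‖ₑ := by
          have := measurable_kK
          fun_prop
        rw [lintegral_mul_const _ hmk]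
        gcongr
        obtain ⟨c1, c2⟩ := abs_sub_of_mem_dyQ hy (dyC_mem i)
        refine le_trans (lintegral_mono_set fun x hx => ?_) (hormander (by positivity) c1 c2)
        have : x ∉ dyStar i := fun h => hx (mem_iUnion.2 ⟨i, h⟩)
        simpa only [dyStar, mem_ofPred_eq, not_lt] using this
    _ = _ := ENNReal.tsum_mul_left

/-- The constant of the weak-type estimate. -/
noncomputable def kA : ℝ≥0∞ :=
  4 * kM ^ (2 : ℝ) + 2 * (256 * kM ^ (2 : ℝ) + 96 + 32 * ENNReal.ofReal (50 * kC * kI))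

lemma kA_lt_top : kA < ∞ := by
  have := ENNReal.rpow_lt_top_of_nonneg zero_le_two kM_lt_top.ne
  unfold kA
  finiteness

/-! ### The weak-type estimate -/

lemma enorm_average_le {f : ℝ × ℝ → ℝ} {L : ℝ≥0∞} (i : ℤ × ℤ × ℤ)
    (h : ∫⁻ x in dyQ i, ‖f x‖ₑ ≤ L * volume (dyQ i)) : ‖⨍ y in dyQ i, f y‖ₑ ≤ L := by
  have h0 := volume_dyQ_ne_zero i
  have h1 := volume_dyQ_ne_top i
  rw [setAverage_eq, enorm_smul, Real.enorm_eq_ofReal (by positivity), measureReal_def,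
    ENNReal.ofReal_inv_of_pos (ENNReal.toReal_pos h0 h1), ENNReal.ofReal_toReal h1]
  calc (volume (dyQ i))⁻¹ * ‖∫ y in dyQ i, f y‖ₑ
      ≤ (volume (dyQ i))⁻¹ * (L * volume (dyQ i)) := by
        gcongr
        exact (enorm_integral_le_lintegral_enorm _).trans h
    _ = L := by rw [mul_comm L, ← mul_assoc, ENNReal.inv_mul_cancel h0 h1, one_mul]

/-- Weak-type estimate for `T = conv kK`, in the two-sided truncated form that integrates directly
to `Lᵖ` bounds for `1 < p < 2`. -/
lemma weak_estimate {f : ℝ × ℝ → ℝ} (hf : Continuous f) (hfi : Integrable f) {l : ℝ} (hl : 0 < l) :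
    ENNReal.ofReal l ^ (2 : ℝ) * volume {x | l < |conv kK f x|}
      ≤ kA * ((∫⁻ x in {x | |f x| ≤ l}, ‖f x‖ₑ ^ (2 : ℝ))
          + ENNReal.ofReal l * ∫⁻ x in {x | l < 2 * |f x|}, ‖f x‖ₑ) := by
  obtain ⟨S, hS, hlow, hup, hoff⟩ := exists_cz_cubes hf hfi hl
  obtain ⟨g, hg, hgo, hgi⟩ := exists_good hf.measurable hS
  have hd : Pairwise (Function.onFun Disjoint fun i : S => dyQ i) := fun i j hij =>
    hS i.2 j.2 fun h => hij (Subtype.ext h)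
  have hQ : ∀ i : S, MeasurableSet (dyQ i) := fun i => measurableSet_dyQ _
  set L := ENNReal.ofReal l with hL
  have hL0 : L ≠ 0 := by simpa [hL] using hl
  have hLt : L ≠ ∞ := ENNReal.ofReal_ne_top
  set E := ⋃ i : S, dyQ i with hE
  have hEm : MeasurableSet E := MeasurableSet.iUnion hQ
  set Es := ⋃ i : S, dyStar i with hEs
  have hEsm : MeasurableSet Es := MeasurableSet.iUnion fun i => measurableSet_dyStar _
  set U := ∫⁻ x in {x | |f x| ≤ l}, ‖f x‖ₑ ^ (2 : ℝ) with hU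
  set M := ∫⁻ x in {x | l < 2 * |f x|}, ‖f x‖ₑ with hM
  have hvolE : volume E = ∑' i : S, volume (dyQ i) := measure_iUnion hd hQ
  have hfm := hf.measurable
  have hMset : MeasurableSet {x | l < 2 * |f x|} := measurableSet_lt (by fun_prop) (by fun_prop)
  have hUset : MeasurableSet {x | |f x| ≤ l} := measurableSet_le (by fun_prop) (by fun_prop)
  -- the selected cubes are small in terms of the part of `f` above height `l / 2`
  have hLE : L * volume E ≤ 2 * M := by
    have each : ∀ i : S, L * volume (dyQ i)
        ≤ 2 * ∫⁻ x in dyQ i ∩ {x | l < 2 * |f x|}, ‖f x‖ₑ := by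
      intro i
      have h1 := (hlow i i.2).le
      rw [← lintegral_inter_add_sdiff _ _ hMset] at h1
      have h2 : ∫⁻ x in dyQ i \ {x | l < 2 * |f x|}, ‖f x‖ₑ ≤ L / 2 * volume (dyQ i) := by
        calc ∫⁻ x in dyQ i \ {x | l < 2 * |f x|}, ‖f x‖ₑ
            ≤ ∫⁻ x in dyQ i \ {x | l < 2 * |f x|}, L / 2 := by
              refine setLIntegral_mono' ((hQ i).diff hMset) fun x hx => ?_
              have : 2 * |f x| ≤ l := not_lt.1 hx.2
              rw [Real.enorm_eq_ofReal_abs, hL, ← ENNReal.ofReal_ofNat 2,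
                ← ENNReal.ofReal_div_of_pos (by norm_num)]
              exact ENNReal.ofReal_le_ofReal (by rw [le_div_iff₀ (by norm_num)]; linarith)
          _ = L / 2 * volume (dyQ i \ {x | l < 2 * |f x|}) := by rw [setLIntegral_const]
          _ ≤ _ := by gcongr; exact sdiff_subset
      set X := ∫⁻ x in dyQ i ∩ {x | l < 2 * |f x|}, ‖f x‖ₑ
      have hV := volume_dyQ_ne_top i
      have h3 : L / 2 * volume (dyQ i) + L / 2 * volume (dyQ i)
          ≤ X + L / 2 * volume (dyQ i) := by
        rw [← add_mul, ENNReal.add_halves]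
        exact h1.trans (by gcongr)
      have h4 : L / 2 * volume (dyQ i) ≤ X :=
        (ENNReal.add_le_add_iff_right (by finiteness)).1 h3
      calc L * volume (dyQ i) = 2 * (L / 2 * volume (dyQ i)) := by
            rw [← mul_assoc, ENNReal.mul_div_cancel (by norm_num) (by norm_num)]
        _ ≤ 2 * X := by gcongr
    calc L * volume E = ∑' i : S, L * volume (dyQ i) := by rw [hvolE, ENNReal.tsum_mul_left]
      _ ≤ ∑' i : S, 2 * ∫⁻ x in dyQ i ∩ {x | l < 2 * |f x|}, ‖f x‖ₑ := ENNReal.tsum_le_tsum each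
      _ = 2 * ∑' i : S, ∫⁻ x in dyQ i ∩ {x | l < 2 * |f x|}, ‖f x‖ₑ := ENNReal.tsum_mul_left
      _ = 2 * ∫⁻ x in ⋃ i : S, dyQ i ∩ {x | l < 2 * |f x|}, ‖f x‖ₑ := by
          rw [lintegral_iUnion (fun i => (hQ i).inter hMset)
            (fun i j hij => (hd hij).mono inter_subset_left inter_subset_left)]
      _ ≤ 2 * M := by
          gcongr
          exact lintegral_mono_set (iUnion_subset fun i => inter_subset_right)
  have hgE : ∀ i : S, ∀ x ∈ dyQ i, ‖g x‖ₑ ≤ 8 * L := by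
    intro i x hx
    rw [hgi i x hx]
    exact enorm_average_le _ (hup i i.2)
  have hgE' : ∀ x ∈ E, ‖g x‖ₑ ≤ 8 * L := by
    intro x hx
    obtain ⟨i, hi⟩ := mem_iUnion.1 hx
    exact hgE i x hi
  have hfoff : ∀ x ∈ Eᶜ, |f x| ≤ l := fun x hx =>
    hoff x fun i hi hxi => hx (mem_iUnion.2 ⟨⟨i, hi⟩, hxi⟩)
  have hEfin : volume E ≠ ∞ := by
    intro h
    rw [h, ENNReal.mul_top hL0, top_le_iff] at hLE
    have : M < ∞ := (setLIntegral_le_lintegral _ _).trans_lt hfi.2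
    exact absurd hLE (by finiteness)
  have hgint : Integrable g := by
    refine ⟨hg.aestronglyMeasurable, ?_⟩
    rw [hasFiniteIntegral_iff_enorm, ← lintegral_add_compl _ hEm]
    refine ENNReal.add_lt_top.2 ⟨?_, ?_⟩
    · refine (setLIntegral_mono' hEm hgE').trans_lt ?_
      rw [setLIntegral_const]; finiteness
    · rw [setLIntegral_congr_fun hEm.compl (g := fun x => ‖f x‖ₑ)
        (fun x hx => by simp only [hgo x hx])]
      exact (setLIntegral_le_lintegral _ _).trans_lt hfi.2
  have hg2 : ∫⁻ x, ‖g x‖ₑ ^ (2 : ℝ) ≤ U + 64 * L ^ (2 : ℝ) * volume E := by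
    rw [← lintegral_add_compl _ hEm, add_comm]
    gcongr
    · rw [setLIntegral_congr_fun hEm.compl (g := fun x => ‖f x‖ₑ ^ (2 : ℝ))
        (fun x hx => by simp only [hgo x hx])]
      exact lintegral_mono_set hfoff
    · calc ∫⁻ x in E, ‖g x‖ₑ ^ (2 : ℝ) ≤ ∫⁻ x in E, (8 * L) ^ (2 : ℝ) :=
            setLIntegral_mono' hEm fun x hx => ENNReal.rpow_le_rpow (hgE' x hx) zero_le_two
        _ = 64 * L ^ (2 : ℝ) * volume E := by
            rw [setLIntegral_const, ENNReal.mul_rpow_of_nonneg _ _ zero_le_two]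
            norm_num
  set b : ℝ × ℝ → ℝ := fun x => f x - g x with hb
  have hbm : Measurable b := hfm.sub hg
  have hbi : Integrable b := hfi.sub hgint
  have hb0 : ∀ x ∉ E, b x = 0 := fun x hx => by simp [hb, hgo x hx]
  have hbmean : ∀ i : S, ∫ y in dyQ i, b y = 0 := by
    intro i
    rw [hb, integral_sub hfi.integrableOn hgint.integrableOn,
      setIntegral_congr_fun (hQ i) (g := fun _ => ⨍ y in dyQ i, f y) (fun x hx => hgi i x hx),
      setIntegral_const, measure_smul_setAverage _ (volume_dyQ_ne_top i), sub_self]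
  have hbsum : ∑' i : S, ∫⁻ y in dyQ i, ‖b y‖ₑ ≤ 16 * (L * volume E) := by
    rw [hvolE, ← ENNReal.tsum_mul_left, ← ENNReal.tsum_mul_left]
    refine ENNReal.tsum_le_tsum fun i => ?_
    calc ∫⁻ y in dyQ i, ‖b y‖ₑ ≤ ∫⁻ y in dyQ i, (‖f y‖ₑ + ‖g y‖ₑ) :=
          lintegral_mono fun y => enorm_sub_le
      _ = (∫⁻ y in dyQ i, ‖f y‖ₑ) + ∫⁻ y in dyQ i, ‖g y‖ₑ := lintegral_add_left hfm.enorm _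
      _ ≤ 8 * L * volume (dyQ i) + 8 * L * volume (dyQ i) := by
          refine add_le_add (hup i i.2) ?_
          rw [← setLIntegral_const]
          exact setLIntegral_mono' (hQ i) (hgE i)
      _ = 16 * (L * volume (dyQ i)) := by ring
  have hbound := bdd_of_le abs_kK_le
  have hT : ∀ x, conv kK f x = conv kK g x + conv kK b x := by
    intro x
    simp only [conv]
    rw [← integral_add (conv_integrable measurable_kK hbound hgint x)
      (conv_integrable measurable_kK hbound hbi x)]
    congr 1; funext y; simp only [hb]; ring
  have hgm := (conv_measurable measurable_kK hg).enorm
  have hbm' := (conv_measurable measurable_kK hbm).enorm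
  have hsub : {x | l < |conv kK f x|} ⊆ {x | L ^ (2 : ℝ) ≤ (2 * ‖conv kK g x‖ₑ) ^ (2 : ℝ)}
      ∪ (Es ∪ {x | L ≤ Esᶜ.indicator (fun x => 2 * ‖conv kK b x‖ₑ) x}) := by
    intro x hx
    have hx' : l < |conv kK f x| := hx
    by_cases hxE : x ∈ Es
    · exact Or.inr (Or.inl hxE)
    have e2 : ∀ r : ℝ, 2 * ‖r‖ₑ = ENNReal.ofReal (2 * |r|) := fun r => by
      rw [ENNReal.ofReal_mul (by norm_num), Real.enorm_eq_ofReal_abs]; norm_num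
    by_cases hgx : l ≤ 2 * |conv kK g x|
    · left
      refine ENNReal.rpow_le_rpow ?_ zero_le_two
      rw [e2]
      exact ENNReal.ofReal_le_ofReal hgx
    · right; right
      show L ≤ _
      rw [indicator_of_mem (show x ∈ Esᶜ from hxE), e2]
      refine ENNReal.ofReal_le_ofReal ?_
      rw [hT x] at hx'
      have := abs_add_le (conv kK g x) (conv kK b x)
      linarith
  have c1 : L ^ (2 : ℝ) * volume {x | L ^ (2 : ℝ) ≤ (2 * ‖conv kK g x‖ₑ) ^ (2 : ℝ)}
      ≤ 4 * (kM ^ (2 : ℝ) * (U + 64 * L ^ (2 : ℝ) * volume E)) := by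
    refine (mul_meas_ge_le_lintegral ((hgm.const_mul 2).pow_const _) _).trans ?_
    simp_rw [ENNReal.mul_rpow_of_nonneg _ _ zero_le_two]
    rw [lintegral_const_mul _ (hgm.pow_const _)]
    have : (2 : ℝ≥0∞) ^ (2 : ℝ) = 4 := by norm_num
    rw [this]
    gcongr
    exact (lintegral_conv_kK_sq_le hg hgint).trans (by gcongr)
  have c2 : volume Es ≤ 96 * volume E := by
    rw [hvolE, ← ENNReal.tsum_mul_left]
    exact (measure_iUnion_le _).trans (ENNReal.tsum_le_tsum fun i => volume_dyStar_le _)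
  have c3 : L * volume {x | L ≤ Esᶜ.indicator (fun x => 2 * ‖conv kK b x‖ₑ) x}
      ≤ 32 * ENNReal.ofReal (50 * kC * kI) * (L * volume E) := by
    refine (mul_meas_ge_le_lintegral ((hbm'.const_mul 2).indicator hEsm.compl) _).trans ?_
    rw [lintegral_indicator hEsm.compl, lintegral_const_mul _ hbm']
    calc 2 * ∫⁻ x in Esᶜ, ‖conv kK b x‖ₑ
        ≤ 2 * (ENNReal.ofReal (50 * kC * kI) * (16 * (L * volume E))) := by
          gcongr
          exact (lintegral_conv_bad_le hbm hbi hS hb0 hbmean).trans (by gcongr)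
      _ = _ := by ring
  have hsq : L ^ (2 : ℝ) = L * L := by rw [ENNReal.rpow_two, sq]
  have hLLE : L * (L * volume E) ≤ 2 * (L * M) :=
    (mul_le_mul_right hLE L).trans_eq (by ring)
  calc L ^ (2 : ℝ) * volume {x | l < |conv kK f x|}
      ≤ L ^ (2 : ℝ) * (volume {x | L ^ (2 : ℝ) ≤ (2 * ‖conv kK g x‖ₑ) ^ (2 : ℝ)} + (volume Es
        + volume {x | L ≤ Esᶜ.indicator (fun x => 2 * ‖conv kK b x‖ₑ) x})) := by
        gcongr
        refine (measure_mono hsub).trans ((measure_union_le _ _).trans ?_)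
        gcongr
        exact measure_union_le _ _
    _ = L ^ (2 : ℝ) * volume {x | L ^ (2 : ℝ) ≤ (2 * ‖conv kK g x‖ₑ) ^ (2 : ℝ)}
        + L * L * volume Es
        + L * (L * volume {x | L ≤ Esᶜ.indicator (fun x => 2 * ‖conv kK b x‖ₑ) x}) := by
        rw [hsq]; ring
    _ ≤ 4 * (kM ^ (2 : ℝ) * (U + 64 * L ^ (2 : ℝ) * volume E)) + L * L * (96 * volume E)
        + L * (32 * ENNReal.ofReal (50 * kC * kI) * (L * volume E)) := by gcongr
    _ = 4 * kM ^ (2 : ℝ) * U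
        + (256 * kM ^ (2 : ℝ) + 96 + 32 * ENNReal.ofReal (50 * kC * kI)) * (L * (L * volume E)) := by
        rw [hsq]; ring
    _ ≤ 4 * kM ^ (2 : ℝ) * U
        + (256 * kM ^ (2 : ℝ) + 96 + 32 * ENNReal.ofReal (50 * kC * kI)) * (2 * (L * M)) := by
        gcongr
    _ = 4 * kM ^ (2 : ℝ) * U
        + 2 * (256 * kM ^ (2 : ℝ) + 96 + 32 * ENNReal.ofReal (50 * kC * kI)) * (L * M) := by ring
    _ ≤ kA * U + kA * (L * M) := by
        gcongr
        · exact le_self_add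
        · exact le_add_self
    _ = kA * (U + L * M) := by ring

/-! ### From the weak-type estimate to `Lᵖ`, `1 < p ≤ 2` -/

/-- The inner integral of the layer-cake computation for the part of `f` below the level `t`. -/
lemma lintegral_rpow_above {p r : ℝ} (hp2 : p < 2) (hr : 0 < r) :
    ∫⁻ t in Ioi (0 : ℝ), ENNReal.ofReal (t ^ (p - 3)) * (if r ≤ t then 1 else 0)
      ≤ ENNReal.ofReal (r ^ (p - 2) / (2 - p)) := by
  calc ∫⁻ t in Ioi (0 : ℝ), ENNReal.ofReal (t ^ (p - 3)) * (if r ≤ t then 1 else 0)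
      ≤ ∫⁻ t, (Ici r).indicator (fun t => ENNReal.ofReal (t ^ (p - 3))) t := by
        refine (setLIntegral_le_lintegral _ _).trans_eq ?_
        congr 1; funext t
        by_cases h : r ≤ t <;> simp [h]
    _ = ∫⁻ t in Ioi r, ENNReal.ofReal (t ^ (p - 3)) := by
        rw [lintegral_indicator measurableSet_Ici, setLIntegral_congr Ioi_ae_eq_Ici.symm]
    _ = ENNReal.ofReal (∫ t in Ioi r, t ^ (p - 3)) := by
        rw [ofReal_integral_eq_lintegral_ofReal (integrableOn_Ioi_rpow_of_lt (by linarith) hr)]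
        exact (ae_restrict_mem measurableSet_Ioi).mono fun t ht =>
          Real.rpow_nonneg (hr.le.trans (le_of_lt ht)) _
    _ = ENNReal.ofReal (r ^ (p - 2) / (2 - p)) := by
        rw [integral_Ioi_rpow_of_lt (by linarith) hr, show p - 3 + 1 = p - 2 by ring,
          neg_div, ← div_neg, neg_sub]

/-- The inner integral of the layer-cake computation for the part of `f` above the level `t / 2`. -/
lemma lintegral_rpow_below {p r : ℝ} (hp1 : 1 < p) (hr : 0 ≤ r) :
    ∫⁻ t in Ioi (0 : ℝ), ENNReal.ofReal (t ^ (p - 2)) * (if t < r then 1 else 0)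
      ≤ ENNReal.ofReal (r ^ (p - 1) / (p - 1)) := by
  calc ∫⁻ t in Ioi (0 : ℝ), ENNReal.ofReal (t ^ (p - 2)) * (if t < r then 1 else 0)
      ≤ ∫⁻ t, (Ioc 0 r).indicator (fun t => ENNReal.ofReal (t ^ (p - 2))) t := by
        rw [← lintegral_indicator measurableSet_Ioi]
        refine lintegral_mono fun t => ?_
        by_cases h0 : 0 < t
        · by_cases h : t < r
          · simp [h0, h, h.le]
          · rw [indicator_of_mem (show t ∈ Ioi 0 from h0)]; simp [h]
        · simp [h0]
    _ = ∫⁻ t in Ioc 0 r, ENNReal.ofReal (t ^ (p - 2)) := lintegral_indicator measurableSet_Ioc _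
    _ = ENNReal.ofReal (∫ t in Ioc 0 r, t ^ (p - 2)) := by
        have := (intervalIntegral.intervalIntegrable_rpow' (a := 0) (b := r) (r := p - 2)
          (by linarith)).1
        rw [ofReal_integral_eq_lintegral_ofReal this]
        exact (ae_restrict_mem measurableSet_Ioc).mono fun t ht => Real.rpow_nonneg ht.1.le _
    _ = ENNReal.ofReal (r ^ (p - 1) / (p - 1)) := by
        rw [← intervalIntegral.integral_of_le hr, integral_rpow (Or.inl (by linarith)),
          show p - 2 + 1 = p - 1 by ring, Real.zero_rpow (by linarith), sub_zero]

/-- The `Lᵖ` bound for `T = conv kK`, on the dense class of continuous compactly supported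
functions. -/
def StrongType (p : ℝ) : Prop :=
  ∃ C : ℝ≥0∞, C < ∞ ∧ ∀ f : ℝ × ℝ → ℝ, Continuous f → HasCompactSupport f →
    ∫⁻ x, ‖conv kK f x‖ₑ ^ p ≤ C * ∫⁻ x, ‖f x‖ₑ ^ p

lemma strongType_two : StrongType 2 :=
  ⟨kM ^ (2 : ℝ), ENNReal.rpow_lt_top_of_nonneg zero_le_two kM_lt_top.ne, fun _ hf hfc =>
    lintegral_conv_kK_sq_le hf.measurable (hf.integrable_of_hasCompactSupport hfc)⟩

/-- The weak-type estimate at every level `t`, multiplied by `t ^ (p - 1)` and integrated in `t`. -/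
lemma strongType_of_lt_two {p : ℝ} (hp1 : 1 < p) (hp2 : p < 2) : StrongType p := by
  refine ⟨ENNReal.ofReal p * (kA * (ENNReal.ofReal (1 / (2 - p))
    + ENNReal.ofReal (2 ^ (p - 1) / (p - 1)))), ?_, fun f hf hfc => ?_⟩
  · have := kA_lt_top
    finiteness
  have hfi := hf.integrable_of_hasCompactSupport hfc (μ := volume)
  have hfm := hf.measurable
  have hTm := conv_measurable measurable_kK hfm
  have hp0 : 0 < p := by linarith
  have e1 : ∫⁻ x, ‖conv kK f x‖ₑ ^ p = ENNReal.ofReal p *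
      ∫⁻ t in Ioi (0 : ℝ), volume {x | t < |conv kK f x|} * ENNReal.ofReal (t ^ (p - 1)) := by
    rw [← lintegral_rpow_eq_lintegral_meas_lt_mul volume (f := fun x => |conv kK f x|)
      (Filter.Eventually.of_forall fun x => abs_nonneg _) hTm.abs.aemeasurable hp0]
    refine lintegral_congr fun x => ?_
    rw [Real.enorm_eq_ofReal_abs, ENNReal.ofReal_rpow_of_nonneg (abs_nonneg _) hp0.le]
  have e2 : ∀ t ∈ Ioi (0 : ℝ), volume {x | t < |conv kK f x|} * ENNReal.ofReal (t ^ (p - 1))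
      ≤ kA * ((∫⁻ x, ENNReal.ofReal (t ^ (p - 3)) * (if |f x| ≤ t then 1 else 0)
            * ‖f x‖ₑ ^ (2 : ℝ))
          + ∫⁻ x, ENNReal.ofReal (t ^ (p - 2)) * (if t < 2 * |f x| then 1 else 0) * ‖f x‖ₑ) := by
    intro t ht
    have ht : 0 < t := ht
    have hw := weak_estimate hf hfi ht
    have hm1 : MeasurableSet {x | |f x| ≤ t} := measurableSet_le (by fun_prop) (by fun_prop)
    have hm2 : MeasurableSet {x | t < 2 * |f x|} := measurableSet_lt (by fun_prop) (by fun_prop)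
    have i1 : ∫⁻ x, ENNReal.ofReal (t ^ (p - 3)) * (if |f x| ≤ t then 1 else 0)
        * ‖f x‖ₑ ^ (2 : ℝ)
        = ENNReal.ofReal (t ^ (p - 3)) * ∫⁻ x in {x | |f x| ≤ t}, ‖f x‖ₑ ^ (2 : ℝ) := by
      rw [← lintegral_indicator hm1, ← lintegral_const_mul' _ _ ENNReal.ofReal_ne_top]
      refine lintegral_congr fun x => ?_
      by_cases h : |f x| ≤ t <;> simp [h]
    have i2 : ∫⁻ x, ENNReal.ofReal (t ^ (p - 2)) * (if t < 2 * |f x| then 1 else 0) * ‖f x‖ₑ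
        = ENNReal.ofReal (t ^ (p - 3)) * (ENNReal.ofReal t
          * ∫⁻ x in {x | t < 2 * |f x|}, ‖f x‖ₑ) := by
      rw [← lintegral_indicator hm2, ← mul_assoc, ← ENNReal.ofReal_mul (by positivity),
        show t ^ (p - 3) * t = t ^ (p - 2) by
          rw [← Real.rpow_add_one ht.ne']; congr 1; ring,
        ← lintegral_const_mul' _ _ ENNReal.ofReal_ne_top]
      refine lintegral_congr fun x => ?_
      by_cases h : t < 2 * |f x| <;> simp [h]
    have e3 : ENNReal.ofReal (t ^ (p - 1))
        = ENNReal.ofReal (t ^ (p - 3)) * ENNReal.ofReal t ^ (2 : ℝ) := by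
      rw [ENNReal.ofReal_rpow_of_pos ht, ← ENNReal.ofReal_mul (by positivity),
        ← Real.rpow_add ht]
      congr 2; ring
    rw [i1, i2, ← mul_add, e3, mul_comm, mul_assoc, mul_left_comm kA]
    gcongr
  have m0 : ∀ a : ℝ, Measurable fun z : ℝ × (ℝ × ℝ) => ENNReal.ofReal (z.1 ^ a) := fun a => by
    fun_prop
  have m1 : Measurable fun z : ℝ × (ℝ × ℝ) =>
      ENNReal.ofReal (z.1 ^ (p - 3)) * (if |f z.2| ≤ z.1 then 1 else 0) * ‖f z.2‖ₑ ^ (2 : ℝ) := by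
    refine ((m0 _).mul (Measurable.ite (measurableSet_le (by fun_prop) (by fun_prop))
      measurable_const measurable_const)).mul (by fun_prop)
  have m2 : Measurable fun z : ℝ × (ℝ × ℝ) =>
      ENNReal.ofReal (z.1 ^ (p - 2)) * (if z.1 < 2 * |f z.2| then 1 else 0) * ‖f z.2‖ₑ := by
    refine ((m0 _).mul (Measurable.ite (measurableSet_lt (by fun_prop) (by fun_prop))
      measurable_const measurable_const)).mul (by fun_prop)
  have j1 : ∫⁻ t in Ioi (0 : ℝ), ∫⁻ x, ENNReal.ofReal (t ^ (p - 3))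
        * (if |f x| ≤ t then 1 else 0) * ‖f x‖ₑ ^ (2 : ℝ)
      ≤ ENNReal.ofReal (1 / (2 - p)) * ∫⁻ x, ‖f x‖ₑ ^ p := by
    rw [lintegral_lintegral_swap m1.aemeasurable, ← lintegral_const_mul _ (by fun_prop)]
    refine lintegral_mono fun x => ?_
    rcases eq_or_ne (f x) 0 with h0 | h0
    · simp [h0]
    have hx : 0 < |f x| := abs_pos.2 h0
    have hmt : Measurable fun t : ℝ =>
        ENNReal.ofReal (t ^ (p - 3)) * (if |f x| ≤ t then 1 else 0) :=
      Measurable.mul (by fun_prop) (Measurable.ite (measurableSet_le (by fun_prop) (by fun_prop))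
        measurable_const measurable_const)
    show ∫⁻ t in Ioi (0 : ℝ), ENNReal.ofReal (t ^ (p - 3))
        * (if |f x| ≤ t then 1 else 0) * ‖f x‖ₑ ^ (2 : ℝ) ≤ _
    rw [lintegral_mul_const _ hmt]
    refine (mul_le_mul_left (lintegral_rpow_above hp2 hx) _).trans_eq ?_
    rw [Real.enorm_eq_ofReal_abs, ENNReal.ofReal_rpow_of_pos hx, ENNReal.ofReal_rpow_of_pos hx,
      ← ENNReal.ofReal_mul (div_nonneg (by positivity) (by linarith)),
      ← ENNReal.ofReal_mul (div_nonneg zero_le_one (by linarith))]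
    rw [show |f x| ^ p = |f x| ^ (p - 2) * |f x| ^ (2 : ℝ) by rw [← Real.rpow_add hx]; congr 1; ring]
    congr 1; ring
  have j2 : ∫⁻ t in Ioi (0 : ℝ), ∫⁻ x, ENNReal.ofReal (t ^ (p - 2))
        * (if t < 2 * |f x| then 1 else 0) * ‖f x‖ₑ
      ≤ ENNReal.ofReal (2 ^ (p - 1) / (p - 1)) * ∫⁻ x, ‖f x‖ₑ ^ p := by
    rw [lintegral_lintegral_swap m2.aemeasurable, ← lintegral_const_mul _ (by fun_prop)]
    refine lintegral_mono fun x => ?_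
    rcases eq_or_ne (f x) 0 with h0 | h0
    · simp [h0]
    have hx : 0 < |f x| := abs_pos.2 h0
    have hmt : Measurable fun t : ℝ =>
        ENNReal.ofReal (t ^ (p - 2)) * (if t < 2 * |f x| then 1 else 0) :=
      Measurable.mul (by fun_prop) (Measurable.ite (measurableSet_lt (by fun_prop) (by fun_prop))
        measurable_const measurable_const)
    show ∫⁻ t in Ioi (0 : ℝ), ENNReal.ofReal (t ^ (p - 2))
        * (if t < 2 * |f x| then 1 else 0) * ‖f x‖ₑ ≤ _
    rw [lintegral_mul_const _ hmt]
    refine (mul_le_mul_left (lintegral_rpow_below hp1 (by positivity)) _).trans_eq ?_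
    rw [Real.enorm_eq_ofReal_abs, ENNReal.ofReal_rpow_of_pos hx,
      ← ENNReal.ofReal_mul (div_nonneg (by positivity) (by linarith)),
      ← ENNReal.ofReal_mul (div_nonneg (by positivity) (by linarith)),
      Real.mul_rpow zero_le_two hx.le]
    rw [show |f x| ^ p = |f x| ^ (p - 1) * |f x| by
      rw [← Real.rpow_add_one hx.ne']; congr 1; ring]
    congr 1; ring
  rw [e1, mul_assoc, mul_assoc, add_mul]
  gcongr
  refine (setLIntegral_mono' measurableSet_Ioi e2).trans ?_
  rw [lintegral_const_mul' _ _ kA_lt_top.ne, lintegral_add_left m1.lintegral_prod_right']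
  gcongr

/-! ### Duality: `p > 2` -/

/-- Fatou's lemma for a pointwise limit of uniformly bounded integrals. -/
lemma lintegral_le_of_tendsto {a : ℕ → ℝ × ℝ → ℝ≥0∞} {A : ℝ × ℝ → ℝ≥0∞} {B : ℝ≥0∞}
    (hm : ∀ n, Measurable (a n)) (hlim : ∀ x, Filter.Tendsto (fun n => a n x) Filter.atTop (nhds (A x)))
    (hB : ∀ n, ∫⁻ x, a n x ≤ B) : ∫⁻ x, A x ≤ B := by
  calc ∫⁻ x, A x = ∫⁻ x, Filter.liminf (fun n => a n x) Filter.atTop :=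
        lintegral_congr fun x => ((hlim x).liminf_eq).symm
    _ ≤ Filter.liminf (fun n => ∫⁻ x, a n x) Filter.atTop := lintegral_liminf_le hm
    _ ≤ B := Filter.liminf_le_of_le (by isBoundedDefault) fun b hb => by
        obtain ⟨n, hn⟩ := hb.exists
        exact hn.trans (hB n)

lemma continuous_conv_kK {f : ℝ × ℝ → ℝ} (hf : Continuous f) (hfc : HasCompactSupport f) :
    Continuous (conv kK f) := by
  have hloc : LocallyIntegrable kK := by
    refine (locallyIntegrable_const kC).mono measurable_kK.aestronglyMeasurable
      (Filter.Eventually.of_forall fun x => ?_)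
    rw [Real.norm_eq_abs, Real.norm_eq_abs, abs_of_pos kC_pos]
    exact bdd_of_le abs_kK_le x
  have h := hfc.continuous_convolution_right (ContinuousLinearMap.mul ℝ ℝ) hloc hf
  convert h using 1
  funext x
  rw [conv, convolution_def, ← integral_sub_left_eq_self _ _ x]
  simp

/-- The transpose of `T = conv kK` is `T` conjugated by the reflection `x ↦ -x`. -/
lemma integral_conv_mul {f G : ℝ × ℝ → ℝ} (hfi : Integrable f) (hGi : Integrable G) :
    ∫ x, conv kK f x * G x = ∫ y, f y * conv kK (fun z => G (-z)) (-y) := by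
  have hprod : Integrable (fun z : (ℝ × ℝ) × (ℝ × ℝ) => kK (z.1 - z.2) * (G z.1 * f z.2))
      (volume.prod volume) := by
    refine (hGi.mul_prod hfi).bdd_mul (c := kC)
      (measurable_kK.comp (measurable_fst.sub measurable_snd)).aestronglyMeasurable
      (Filter.Eventually.of_forall fun z => bdd_of_le abs_kK_le _)
  calc ∫ x, conv kK f x * G x = ∫ x, ∫ y, kK (x - y) * (G x * f y) := by
        refine integral_congr_ae (Filter.Eventually.of_forall fun x => ?_)
        simp only [conv]
        rw [← integral_mul_const]
        congr 1; funext y; ring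
    _ = ∫ y, ∫ x, kK (x - y) * (G x * f y) := integral_integral_swap hprod
    _ = _ := by
        refine integral_congr_ae (Filter.Eventually.of_forall fun y => ?_)
        simp only [conv]
        rw [← integral_const_mul, ← integral_neg_eq_self]
        congr 1; funext x
        rw [neg_sub_left, neg_sub_left, add_comm]; ring

/-- Duality, tested against `G = χ |Tf| ^ (p - 2) Tf`; the cutoff `χ` makes the integral of
`χ |Tf| ^ p` finite, so that it can be divided out. -/
lemma duality_truncated {p q : ℝ} (hpq : p.HolderConjugate q) (hp2 : 2 < p) {C : ℝ≥0∞}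
    (hq : ∀ f : ℝ × ℝ → ℝ, Continuous f → HasCompactSupport f →
      ∫⁻ x, ‖conv kK f x‖ₑ ^ q ≤ C * ∫⁻ x, ‖f x‖ₑ ^ q)
    {f : ℝ × ℝ → ℝ} (hf : Continuous f) (hfc : HasCompactSupport f)
    {χ : ℝ × ℝ → ℝ} (hχ : Continuous χ) (hχc : HasCompactSupport χ) (h0 : ∀ x, 0 ≤ χ x)
    (h1 : ∀ x, χ x ≤ 1) :
    ∫⁻ x, ENNReal.ofReal (χ x * |conv kK f x| ^ p) ≤ C ^ (p / q) * ∫⁻ x, ‖f x‖ₑ ^ p := by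
  have hp0 : 0 < p := by linarith
  have hq0 : 0 < q := hpq.symm.pos
  set F := conv kK f with hFdef
  have hF : Continuous F := continuous_conv_kK hf hfc
  set G : ℝ × ℝ → ℝ := fun x => χ x * (|F x| ^ (p - 2) * F x) with hG
  have hGc : Continuous G :=
    hχ.mul ((hF.abs.rpow_const fun _ => Or.inr (by linarith)).mul hF)
  have hGs : HasCompactSupport G := hχc.mul_right
  have hfi := hf.integrable_of_hasCompactSupport hfc (μ := volume)
  have hGi := hGc.integrable_of_hasCompactSupport hGs (μ := volume)
  set A := ∫⁻ x, ENNReal.ofReal (χ x * |F x| ^ p) with hA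
  have hAi : Integrable fun x => χ x * |F x| ^ p :=
    (hχ.mul (hF.abs.rpow_const fun _ => Or.inr hp0.le)).integrable_of_hasCompactSupport
      hχc.mul_right
  have hAt : A ≠ ∞ := by
    have := hAi.lintegral_lt_top
    exact this.ne
  have absG : ∀ x, |G x| = χ x * |F x| ^ (p - 1) := by
    intro x
    rcases eq_or_ne (F x) 0 with hx | hx
    · simp [hG, hx, Real.zero_rpow (show p - 1 ≠ 0 by linarith)]
    · have hx' : 0 < |F x| := abs_pos.2 hx
      rw [hG]
      simp only [abs_mul, abs_of_nonneg (h0 x), abs_of_nonneg (Real.rpow_nonneg hx'.le _)]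
      rw [← Real.rpow_add_one hx'.ne']; ring_nf
  have FG : ∀ x, F x * G x = χ x * |F x| ^ p := by
    intro x
    rcases eq_or_ne (F x) 0 with hx | hx
    · simp [hG, hx, Real.zero_rpow hp0.ne']
    · have hx' : 0 < |F x| := abs_pos.2 hx
      rw [hG, show |F x| ^ p = |F x| ^ (p - 2) * |F x| ^ (2 : ℝ) by
        rw [← Real.rpow_add hx']; congr 1; ring, Real.rpow_two, sq_abs]
      ring
  have GA : ∫⁻ x, ‖G x‖ₑ ^ q ≤ A := by
    refine lintegral_mono fun x => ?_
    rw [Real.enorm_eq_ofReal_abs, ENNReal.ofReal_rpow_of_nonneg (abs_nonneg _) hq0.le, absG,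
      Real.mul_rpow (h0 x) (by positivity), ← Real.rpow_mul (abs_nonneg _), hpq.sub_one_mul_conj]
    refine ENNReal.ofReal_le_ofReal (mul_le_mul_of_nonneg_right ?_ (by positivity))
    exact Real.rpow_le_self_of_le_one (h0 x) (h1 x) hpq.symm.lt.le
  set H : ℝ × ℝ → ℝ := conv kK fun z => G (-z) with hH
  have hHm : Measurable H := conv_measurable measurable_kK (hGc.measurable.comp measurable_neg)
  have hHq : ∫⁻ y, ‖H (-y)‖ₑ ^ q ≤ C * A := by
    rw [lintegral_neg_eq_self (fun y => ‖H y‖ₑ ^ q)]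
    refine (hq _ (hGc.comp continuous_neg) (hGs.comp_homeomorph (Homeomorph.neg _))).trans ?_
    gcongr
    refine (lintegral_neg_eq_self (fun y => ‖G y‖ₑ ^ q)).trans_le GA
  have key : A ≤ (∫⁻ x, ‖f x‖ₑ ^ p) ^ (1 / p) * (C * A) ^ (1 / q) := by
    calc A = ENNReal.ofReal (∫ x, χ x * |F x| ^ p) := by
          rw [ofReal_integral_eq_lintegral_ofReal hAi
            (Filter.Eventually.of_forall fun x => mul_nonneg (h0 x) (by positivity))]
      _ = ENNReal.ofReal (∫ y, f y * H (-y)) := by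
          rw [hH, ← integral_conv_mul hfi hGi]; simp only [← hFdef, FG]
      _ ≤ ‖∫ y, f y * H (-y)‖ₑ := by
          rw [Real.enorm_eq_ofReal_abs]; exact ENNReal.ofReal_le_ofReal (le_abs_self _)
      _ ≤ ∫⁻ y, ‖f y‖ₑ * ‖H (-y)‖ₑ :=
          (enorm_integral_le_lintegral_enorm _).trans_eq (by simp only [enorm_mul])
      _ ≤ (∫⁻ y, ‖f y‖ₑ ^ p) ^ (1 / p) * (∫⁻ y, ‖H (-y)‖ₑ ^ q) ^ (1 / q) :=
          ENNReal.lintegral_mul_le_Lp_mul_Lq volume hpq hf.measurable.enorm.aemeasurable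
            (hHm.comp measurable_neg).enorm.aemeasurable
      _ ≤ _ := by gcongr
  -- divide by `A ^ (1 / q)`, which is finite
  rcases eq_or_ne A 0 with hA0 | hA0
  · rw [hA0]; exact zero_le
  have hsplit : A = A ^ (1 / p) * A ^ (1 / q) := by
    rw [← ENNReal.rpow_add _ _ hA0 hAt, one_div, one_div, hpq.inv_add_inv_eq_one,
      ENNReal.rpow_one]
  have hr0 : A ^ (1 / q) ≠ 0 := by
    simp [ENNReal.rpow_eq_zero_iff, hA0, hAt]
  have hrt : A ^ (1 / q) ≠ ∞ := ENNReal.rpow_ne_top_of_nonneg (by positivity) hAt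
  have key2 : A ^ (1 / p) ≤ C ^ (1 / q) * (∫⁻ x, ‖f x‖ₑ ^ p) ^ (1 / p) := by
    rw [ENNReal.mul_rpow_of_nonneg _ _ (by positivity), ← mul_assoc] at key
    nth_rewrite 1 [hsplit] at key
    rw [mul_comm (C ^ _)]
    exact (ENNReal.mul_le_mul_iff_left hr0 hrt).1 key
  have key3 := ENNReal.rpow_le_rpow key2 hp0.le
  rw [ENNReal.mul_rpow_of_nonneg _ _ hp0.le, ← ENNReal.rpow_mul, ← ENNReal.rpow_mul,
    ← ENNReal.rpow_mul, one_div_mul_cancel hp0.ne', ENNReal.rpow_one, ENNReal.rpow_one] at key3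
  rwa [show 1 / q * p = p / q by ring] at key3

lemma strongType_of_two_lt {p : ℝ} (hp2 : 2 < p) : StrongType p := by
  have hpq := Real.HolderConjugate.conjExponent (show 1 < p by linarith)
  set q := p.conjExponent with hqd
  have hq1 : 1 < q := hpq.symm.lt
  have hq2 : q < 2 := by
    rw [hqd, Real.conjExponent, div_lt_iff₀ (by linarith)]; linarith
  obtain ⟨C, hC, hCq⟩ := strongType_of_lt_two hq1 hq2
  refine ⟨C ^ (p / q), ENNReal.rpow_lt_top_of_nonneg (by positivity) hC.ne, fun f hf hfc => ?_⟩
  have hF := continuous_conv_kK hf hfc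
  set χ : ℕ → ℝ × ℝ → ℝ := fun n x => max 0 (min 1 (n - ‖x‖)) with hχ
  have hχc : ∀ n, Continuous (χ n) := fun n => by rw [hχ]; fun_prop
  have hχs : ∀ n, HasCompactSupport (χ n) := fun n => by
    refine HasCompactSupport.intro (isCompact_closedBall 0 n) fun x hx => ?_
    rw [mem_closedBall_zero_iff, not_le] at hx
    exact max_eq_left ((min_le_right _ _).trans (by linarith))
  refine lintegral_le_of_tendsto (a := fun n x => ENNReal.ofReal (χ n x * |conv kK f x| ^ p))
    (fun n => ?_) (fun x => ?_) (fun n => duality_truncated hpq hp2 hCq hf hfc (hχc n) (hχs n)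
      (fun x => le_max_left _ _) (fun x => max_le zero_le_one (min_le_left _ _)))
  · have := (hχc n).measurable
    have := hF.measurable
    fun_prop
  · refine tendsto_const_nhds.congr' ?_
    obtain ⟨N, hN⟩ := exists_nat_ge (‖x‖ + 1)
    filter_upwards [Filter.eventually_ge_atTop N] with n hn
    have : (N : ℝ) ≤ n := by exact_mod_cast hn
    have e : χ n x = 1 := by
      simp only [hχ]
      rw [min_eq_left (by linarith), max_eq_right zero_le_one]
    rw [e, one_mul, Real.enorm_eq_ofReal_abs,
      ENNReal.ofReal_rpow_of_nonneg (abs_nonneg _) (by linarith)]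

/-- The `Lᵖ` bound for `T = conv kK` in the full range `1 < p`. -/
theorem strongType {p : ℝ} (hp1 : 1 < p) : StrongType p := by
  rcases lt_trichotomy p 2 with h | rfl | h
  · exact strongType_of_lt_two hp1 h
  · exact strongType_two
  · exact strongType_of_two_lt h

/-! ### The representation formula and parabolic dilations -/

lemma dS13_eq {v : ℝ × ℝ → ℝ} (hv : Differentiable ℝ v) (x : ℝ × ℝ) :
    HasDerivAt (fun σ => v (σ, x.2)) (dS13 v x) x.1 ∧ dS13 v x = fderiv ℝ v x (1, 0) := by
  have h : HasDerivAt (fun σ : ℝ => (σ, x.2)) ((1 : ℝ), (0 : ℝ)) x.1 :=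
    (hasDerivAt_id x.1).prodMk (hasDerivAt_const x.1 x.2)
  have h2 := (hv x).hasFDerivAt.comp_hasDerivAt x.1 h
  have e : dS13 v x = fderiv ℝ v x (1, 0) := h2.deriv
  exact ⟨e ▸ h2, e⟩

lemma dT13_eq {v : ℝ × ℝ → ℝ} (hv : Differentiable ℝ v) (x : ℝ × ℝ) :
    HasDerivAt (fun τ => v (x.1, τ)) (dT13 v x) x.2 ∧ dT13 v x = fderiv ℝ v x (0, 1) := by
  have h : HasDerivAt (fun τ : ℝ => (x.1, τ)) ((0 : ℝ), (1 : ℝ)) x.2 :=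
    (hasDerivAt_const x.2 x.1).prodMk (hasDerivAt_id x.2)
  have h2 := (hv x).hasFDerivAt.comp_hasDerivAt x.2 h
  have e : dT13 v x = fderiv ℝ v x (0, 1) := h2.deriv
  exact ⟨e ▸ h2, e⟩

lemma dS13_smooth {v : ℝ × ℝ → ℝ} (hv : ContDiff ℝ (⊤ : ℕ∞) v) (hc : HasCompactSupport v) :
    ContDiff ℝ (⊤ : ℕ∞) (dS13 v) ∧ HasCompactSupport (dS13 v) := by
  have e : dS13 v = fun x => fderiv ℝ v x (1, 0) :=
    funext fun x => (dS13_eq (hv.differentiable (by simp)) x).2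
  rw [e]
  exact ⟨(hv.fderiv_right (m := (⊤ : ℕ∞)) (by simp)).clm_apply contDiff_const,
    hc.fderiv_apply ℝ _⟩

lemma dT13_smooth {v : ℝ × ℝ → ℝ} (hv : ContDiff ℝ (⊤ : ℕ∞) v) (hc : HasCompactSupport v) :
    ContDiff ℝ (⊤ : ℕ∞) (dT13 v) ∧ HasCompactSupport (dT13 v) := by
  have e : dT13 v = fun x => fderiv ℝ v x (0, 1) :=
    funext fun x => (dT13_eq (hv.differentiable (by simp)) x).2
  rw [e]
  exact ⟨(hv.fderiv_right (m := (⊤ : ℕ∞)) (by simp)).clm_apply contDiff_const,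
    hc.fderiv_apply ℝ _⟩

lemma conv_dS13 {F F' w : ℝ × ℝ → ℝ}
    (hd : ∀ s t, HasDerivAt (fun σ => F (σ, t)) (F' (s, t)) s)
    (hF : Measurable F) (hF' : Measurable F') {C C' : ℝ} (hC : ∀ x, |F x| ≤ C)
    (hC' : ∀ x, |F' x| ≤ C') (hw : ContDiff ℝ (⊤ : ℕ∞) w) (hc : HasCompactSupport w)
    (x : ℝ × ℝ) : conv F (dS13 w) x = conv F' w x := by
  obtain ⟨hw', hc'⟩ := dS13_smooth hw hc
  have hi := hw.continuous.integrable_of_hasCompactSupport hc (μ := volume)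
  have hi' := hw'.continuous.integrable_of_hasCompactSupport hc' (μ := volume)
  have i1 := conv_integrable hF hC hi x
  have i2 := conv_integrable hF hC hi' x
  have i3 := conv_integrable hF' hC' hi x
  have h := integral_dS_eq_zero (G := fun y => F (x - y) * w y)
    (G' := fun y => F (x - y) * dS13 w y - F' (x - y) * w y) (fun s t => ?_) i1 (i2.sub i3)
  · rw [integral_sub i2 i3] at h
    exact sub_eq_zero.1 h
  · have h1 := (hd (x.1 - s) (x.2 - t)).comp_const_sub x.1 s
    have h2 := (dS13_eq (hw.differentiable (by simp)) (s, t)).1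
    exact (h1.mul h2).congr_deriv (by
      show -F' (x.1 - s, x.2 - t) * w (s, t) + F (x.1 - s, x.2 - t) * dS13 w (s, t)
        = F (x.1 - s, x.2 - t) * dS13 w (s, t) - F' (x.1 - s, x.2 - t) * w (s, t)
      ring)

lemma conv_dT13 {F F' w : ℝ × ℝ → ℝ}
    (hd : ∀ s t, HasDerivAt (fun τ => F (s, τ)) (F' (s, t)) t)
    (hF : Measurable F) (hF' : Measurable F') {C C' : ℝ} (hC : ∀ x, |F x| ≤ C)
    (hC' : ∀ x, |F' x| ≤ C') (hw : ContDiff ℝ (⊤ : ℕ∞) w) (hc : HasCompactSupport w)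
    (x : ℝ × ℝ) : conv F (dT13 w) x = conv F' w x := by
  obtain ⟨hw', hc'⟩ := dT13_smooth hw hc
  have hi := hw.continuous.integrable_of_hasCompactSupport hc (μ := volume)
  have hi' := hw'.continuous.integrable_of_hasCompactSupport hc' (μ := volume)
  have i1 := conv_integrable hF hC hi x
  have i2 := conv_integrable hF hC hi' x
  have i3 := conv_integrable hF' hC' hi x
  have h := integral_dT_eq_zero (G := fun y => F (x - y) * w y)
    (G' := fun y => F (x - y) * dT13 w y - F' (x - y) * w y) (fun s t => ?_) i1 (i2.sub i3)
  · rw [integral_sub i2 i3] at h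
    exact sub_eq_zero.1 h
  · have h1 := (hd (x.1 - s) (x.2 - t)).comp_const_sub x.2 t
    have h2 := (dT13_eq (hw.differentiable (by simp)) (s, t)).1
    exact (h1.mul h2).congr_deriv (by
      show -F' (x.1 - s, x.2 - t) * w (s, t) + F (x.1 - s, x.2 - t) * dT13 w (s, t)
        = F (x.1 - s, x.2 - t) * dT13 w (s, t) - F' (x.1 - s, x.2 - t) * w (s, t)
      ring)

/-- The heat operator applied to `v`. -/
noncomputable def heatOp (v : ℝ × ℝ → ℝ) : ℝ × ℝ → ℝ := fun x => dS13 v x - dT13 (dT13 v) x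

lemma heatOp_continuous {v : ℝ × ℝ → ℝ} (hv : ContDiff ℝ (⊤ : ℕ∞) v) (hc : HasCompactSupport v) :
    Continuous (heatOp v) ∧ HasCompactSupport (heatOp v) := by
  obtain ⟨a1, a2⟩ := dS13_smooth hv hc
  obtain ⟨b1, b2⟩ := dT13_smooth hv hc
  obtain ⟨c1, c2⟩ := dT13_smooth b1 b2
  exact ⟨a1.continuous.sub c1.continuous, a2.sub c2⟩

/-- Since `kH` inverts the heat operator up to `kPsi`, the operator `T = conv kK` recovers
a mollification of `∂ₜ∂ₜ v` from the heat operator applied to `v`. -/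
lemma conv_kK_heatOp {v : ℝ × ℝ → ℝ} (hv : ContDiff ℝ (⊤ : ℕ∞) v) (hc : HasCompactSupport v)
    (x : ℝ × ℝ) : conv kK (heatOp v) x = conv kPsi (dT13 (dT13 v)) x := by
  obtain ⟨a1, a2⟩ := dS13_smooth hv hc
  obtain ⟨b1, b2⟩ := dT13_smooth hv hc
  obtain ⟨c1, c2⟩ := dT13_smooth b1 b2
  have hai := a1.continuous.integrable_of_hasCompactSupport a2 (μ := volume)
  have hci := c1.continuous.integrable_of_hasCompactSupport c2 (μ := volume)
  have bK := bdd_of_le abs_kK_le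
  have bKs := bdd_of_le abs_kKs_le'
  have bHs := bdd_of_le abs_kHs_le
  have bHst := bdd_of_le abs_kHst_le
  have e1 : conv kK (dS13 v) x = conv kHs (dT13 (dT13 v)) x := by
    rw [conv_dS13 hasDerivAt_kK_s measurable_kK measurable_kKs bK bKs hv hc,
      conv_dT13 hasDerivAt_kHs_t measurable_kHs measurable_kHst bHs bHst b1 b2,
      conv_dT13 hasDerivAt_kHst_t measurable_kHst measurable_kKs bHst bKs hv hc]
  have e2 : conv kK (heatOp v) x = conv kK (dS13 v) x - conv kK (dT13 (dT13 v)) x := by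
    simp only [conv, heatOp, mul_sub]
    exact integral_sub (conv_integrable measurable_kK bK hai x)
      (conv_integrable measurable_kK bK hci x)
  rw [e2, e1]
  simp only [conv]
  rw [← integral_sub (conv_integrable measurable_kHs bHs hci x)
    (conv_integrable measurable_kK bK hci x)]
  congr 1; funext y
  rw [← kHs_sub_kK]; ring

lemma integrable_kPsi : Integrable kPsi :=
  ⟨measurable_kPsi.aestronglyMeasurable, kM_lt_top⟩

lemma integral_kPsi_pos : 0 < ∫ x, kPsi x := by
  rw [integral_pos_iff_support_of_nonneg (f := kPsi) (fun x => hPhi_nonneg _ x) integrable_kPsi]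
  refine lt_of_lt_of_le ?_ (measure_mono (s := {x : ℝ × ℝ | 0 < x.1}) fun x hx => ?_)
  · exact (isOpen_lt continuous_const continuous_fst).measure_pos _ ⟨(1, 0), show (0:ℝ) < 1 from one_pos⟩
  · have hx' : 0 < x.1 := hx
    have : 0 < kPsi x := by
      simp only [kPsi, hPhi, hx', if_true]; positivity
    exact this.ne'

/-- The parabolic dilation `(s, t) ↦ (δ² s, δ t)`. -/
def dil (δ : ℝ) (x : ℝ × ℝ) : ℝ × ℝ := (δ ^ 2 * x.1, δ * x.2)

lemma contDiff_dil (δ : ℝ) : ContDiff ℝ (⊤ : ℕ∞) (dil δ) :=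
  (contDiff_const.mul contDiff_fst).prodMk (contDiff_const.mul contDiff_snd)

lemma dT13_comp_dil (v : ℝ × ℝ → ℝ) (δ : ℝ) :
    dT13 (fun x => v (dil δ x)) = fun x => δ * dT13 v (dil δ x) := by
  funext x
  exact deriv_comp_mul_left δ (fun τ => v (δ ^ 2 * x.1, τ)) x.2

lemma dS13_comp_dil (v : ℝ × ℝ → ℝ) (δ : ℝ) :
    dS13 (fun x => v (dil δ x)) = fun x => δ ^ 2 * dS13 v (dil δ x) := by
  funext x
  exact deriv_comp_mul_left (δ ^ 2) (fun σ => v (σ, δ * x.2)) x.1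

lemma dT13_const_mul (c : ℝ) (v : ℝ × ℝ → ℝ) :
    dT13 (fun x => c * v x) = fun x => c * dT13 v x := by
  funext x
  exact deriv_const_mul_field (v := fun τ => v (x.1, τ)) c

lemma dT13_dT13_comp_dil (v : ℝ × ℝ → ℝ) (δ : ℝ) :
    dT13 (dT13 fun x => v (dil δ x)) = fun x => δ ^ 2 * dT13 (dT13 v) (dil δ x) := by
  rw [dT13_comp_dil, dT13_const_mul, dT13_comp_dil]
  funext x; ring

lemma heatOp_comp_dil (v : ℝ × ℝ → ℝ) (δ : ℝ) :
    heatOp (fun x => v (dil δ x)) = fun x => δ ^ 2 * heatOp v (dil δ x) := by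
  funext x
  rw [heatOp, dS13_comp_dil, dT13_dT13_comp_dil, heatOp]; ring

lemma hasCompactSupport_comp_dil {v : ℝ × ℝ → ℝ} (hc : HasCompactSupport v) {δ : ℝ} (hδ : 0 < δ) :
    HasCompactSupport fun x => v (dil δ x) :=
  hc.comp_homeomorph ((Homeomorph.mulLeft₀ (δ ^ 2) (by positivity)).prodCongr
    (Homeomorph.mulLeft₀ δ hδ.ne'))

lemma lintegral_comp_dil {δ : ℝ} (hδ : 0 < δ) :
    ∃ c : ℝ≥0∞, c ≠ 0 ∧ c ≠ ∞ ∧ ∀ h : ℝ × ℝ → ℝ≥0∞, Measurable h →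
      ∫⁻ x, h (dil δ x) = c * ∫⁻ x, h x := by
  set D : ℝ × ℝ →ₗ[ℝ] ℝ × ℝ :=
    ((δ ^ 2) • LinearMap.id (R := ℝ) (M := ℝ)).prodMap (δ • LinearMap.id (R := ℝ) (M := ℝ)) with hD
  have hdet : LinearMap.det D = δ ^ 3 := by
    rw [hD, LinearMap.det_prodMap]; simp; ring
  have hdet0 : LinearMap.det D ≠ 0 := by rw [hdet]; positivity
  refine ⟨ENNReal.ofReal |(LinearMap.det D)⁻¹|, ?_, ENNReal.ofReal_ne_top, fun h hh => ?_⟩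
  · simpa using hdet0
  · have hm : Measurable D := (LinearMap.continuous_of_finiteDimensional D).measurable
    have := Measure.map_linearMap_addHaar_eq_smul_addHaar (volume : Measure (ℝ × ℝ)) hdet0
    calc ∫⁻ x, h (dil δ x) = ∫⁻ x, h (D x) := rfl
      _ = ∫⁻ x, h x ∂(Measure.map D volume) := (lintegral_map hh hm).symm
      _ = _ := by rw [this, lintegral_smul_measure]; rfl

/-! ### Removing the regularisation -/

/-- The estimate for `∂ₜ∂ₜ v` after mollification by the dilate of `kPsi` at scale `δ`; the
constant does not depend on `δ`, by parabolic scaling. -/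
lemma mollified_bound {p : ℝ} (hp1 : 1 < p) {C : ℝ≥0∞}
    (hC : ∀ f : ℝ × ℝ → ℝ, Continuous f → HasCompactSupport f →
      ∫⁻ x, ‖conv kK f x‖ₑ ^ p ≤ C * ∫⁻ x, ‖f x‖ₑ ^ p)
    {v : ℝ × ℝ → ℝ} (hv : ContDiff ℝ (⊤ : ℕ∞) v) (hc : HasCompactSupport v) {δ : ℝ} (hδ : 0 < δ) :
    ∫⁻ z, ‖∫ y, kPsi y * dT13 (dT13 v) (z - dil δ y)‖ₑ ^ p ≤ C * ∫⁻ x, ‖heatOp v x‖ₑ ^ p := by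
  have hp0 : 0 < p := by linarith
  set vδ : ℝ × ℝ → ℝ := fun x => v (dil δ x) with hvδ
  have hv' : ContDiff ℝ (⊤ : ℕ∞) vδ := hv.comp (contDiff_dil δ)
  have hc' : HasCompactSupport vδ := hasCompactSupport_comp_dil hc hδ
  obtain ⟨b1, b2⟩ := dT13_smooth hv hc
  obtain ⟨c1, c2⟩ := dT13_smooth b1 b2
  set w := dT13 (dT13 v) with hw
  obtain ⟨l1, l2⟩ := heatOp_continuous hv hc
  set ψ : ℝ × ℝ → ℝ := fun z => ∫ y, kPsi y * w (z - dil δ y) with hψ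
  have hψm : Measurable ψ := by
    have : StronglyMeasurable (fun z : (ℝ × ℝ) × (ℝ × ℝ) => kPsi z.2 * w (z.1 - dil δ z.2)) := by
      have := measurable_kPsi
      have := c1.continuous.measurable
      have := (contDiff_dil δ).continuous.measurable
      exact Measurable.stronglyMeasurable (by fun_prop)
    exact this.integral_prod_right.measurable
  have e1 : ∀ x, conv kK (heatOp vδ) x = δ ^ 2 * ψ (dil δ x) := by
    intro x
    rw [conv_kK_heatOp hv' hc', hvδ, dT13_dT13_comp_dil, conv,
      ← integral_sub_left_eq_self _ _ x, hψ, ← integral_const_mul]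
    congr 1; funext y
    have : dil δ (x - y) = dil δ x - dil δ y := by
      ext <;> simp [dil, mul_sub]
    simp only [this, sub_sub_cancel]; ring
  have hT := hC _ (heatOp_continuous hv' hc').1 (heatOp_continuous hv' hc').2
  simp only [e1] at hT
  rw [hvδ, heatOp_comp_dil] at hT
  simp only [enorm_mul, ENNReal.mul_rpow_of_nonneg _ _ hp0.le] at hT
  have hs0 : ‖δ ^ 2‖ₑ ^ p ≠ 0 := by
    simp [ENNReal.rpow_eq_zero_iff, hδ.ne']
  have hst : ‖δ ^ 2‖ₑ ^ p ≠ ∞ := ENNReal.rpow_ne_top_of_nonneg hp0.le enorm_ne_top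
  obtain ⟨c, hc0, hct, hcd⟩ := lintegral_comp_dil hδ
  rw [lintegral_const_mul' _ _ hst, lintegral_const_mul' _ _ hst,
    hcd (fun z => ‖ψ z‖ₑ ^ p) (hψm.enorm.pow_const _),
    hcd (fun z => ‖heatOp v z‖ₑ ^ p) (l1.measurable.enorm.pow_const _),
    mul_left_comm C, mul_left_comm C] at hT
  exact (ENNReal.mul_le_mul_iff_right hc0 hct).1 ((ENNReal.mul_le_mul_iff_right hs0 hst).1 hT)

/-- The estimate for `∂ₜ∂ₜ v`: the mollification of the previous lemma is removed as `δ → 0`. -/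
lemma lintegral_dTT_le {p : ℝ} (hp1 : 1 < p) {C : ℝ≥0∞}
    (hC : ∀ f : ℝ × ℝ → ℝ, Continuous f → HasCompactSupport f →
      ∫⁻ x, ‖conv kK f x‖ₑ ^ p ≤ C * ∫⁻ x, ‖f x‖ₑ ^ p)
    {v : ℝ × ℝ → ℝ} (hv : ContDiff ℝ (⊤ : ℕ∞) v) (hc : HasCompactSupport v) :
    ∫⁻ z, ‖(∫ y, kPsi y) * dT13 (dT13 v) z‖ₑ ^ p ≤ C * ∫⁻ x, ‖heatOp v x‖ₑ ^ p := by
  obtain ⟨b1, b2⟩ := dT13_smooth hv hc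
  obtain ⟨c1, c2⟩ := dT13_smooth b1 b2
  set w := dT13 (dT13 v) with hw
  have hwc := c1.continuous
  obtain ⟨B, hB⟩ := c2.exists_bound_of_continuous hwc
  set δ : ℕ → ℝ := fun n => 1 / ((n : ℝ) + 1) with hδ
  have hδ0 : Filter.Tendsto δ Filter.atTop (nhds 0) := tendsto_one_div_add_atTop_nhds_zero_nat
  have hm : ∀ n z, Measurable fun y => kPsi y * w (z - dil (δ n) y) := fun n z => by
    have := measurable_kPsi
    have := hwc.measurable
    have := (contDiff_dil (δ n)).continuous.measurable
    fun_prop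
  refine lintegral_le_of_tendsto
    (a := fun n z => ‖∫ y, kPsi y * w (z - dil (δ n) y)‖ₑ ^ p) (fun n => ?_) (fun z => ?_)
    (fun n => mollified_bound hp1 hC hv hc (by simp only [hδ]; positivity))
  · have : StronglyMeasurable
        (fun z : (ℝ × ℝ) × (ℝ × ℝ) => kPsi z.2 * w (z.1 - dil (δ n) z.2)) := by
      have := measurable_kPsi
      have := hwc.measurable
      have := (contDiff_dil (δ n)).continuous.measurable
      exact Measurable.stronglyMeasurable (by fun_prop)
    exact this.integral_prod_right.measurable.enorm.pow_const _
  · refine ((ENNReal.continuous_rpow_const (y := p)).tendsto _).comp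
      ((continuous_enorm.tendsto _).comp ?_)
    rw [← integral_mul_const]
    refine tendsto_integral_of_dominated_convergence (fun y => ‖kPsi y‖ * B)
      (fun n => (hm n z).aestronglyMeasurable) (integrable_kPsi.norm.mul_const B)
      (fun n => Filter.Eventually.of_forall fun y => ?_)
      (Filter.Eventually.of_forall fun y => ?_)
    · rw [norm_mul]
      exact mul_le_mul_of_nonneg_left (hB _) (norm_nonneg _)
    · refine Filter.Tendsto.const_mul _ ?_
      have hd : Filter.Tendsto (fun n => z - dil (δ n) y) Filter.atTop (nhds (z - dil 0 y)) := by
        have hcont : Continuous fun d : ℝ => z - dil d y := by unfold dil; fun_prop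
        exact (hcont.tendsto 0).comp hδ0
      have h0 : z - dil 0 y = z := by
        ext <;> simp [dil]
      rw [h0] at hd
      exact (hwc.tendsto z).comp hd

lemma integral_rpow_eq_eLpNorm {p : ℝ} (hp : 1 < p) {g : ℝ × ℝ → ℝ} (hg : Continuous g)
    (hc : HasCompactSupport g) :
    (∫ q, |g q| ^ p) ^ (1 / p) = (eLpNorm g (ENNReal.ofReal p) volume).toReal := by
  have hp0 : 0 < p := by linarith
  have hmem : MemLp g (ENNReal.ofReal p) := hg.memLp_of_hasCompactSupport hc
  rw [hmem.eLpNorm_eq_integral_rpow_norm (by simpa using hp0) ENNReal.ofReal_ne_top,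
    ENNReal.toReal_ofReal hp0.le, ENNReal.toReal_ofReal (by positivity), one_div]
  rfl

/-- Parabolic Calderón–Zygmund inequality for the heat operator `∂ₛ - ∂ₜ∂ₜ` on `ℝ²`. -/
theorem parabolic_calderon_zygmund (p : ℝ) (hp1 : 1 < p) :
    ∃ c : ℝ, 0 < c ∧
      ∀ v : ℝ × ℝ → ℝ, ContDiff ℝ (⊤ : ℕ∞) v → HasCompactSupport v →
        (∫ q : ℝ × ℝ, |dS13 v q| ^ p) ^ (1 / p)
          + (∫ q : ℝ × ℝ, |dT13 (dT13 v) q| ^ p) ^ (1 / p)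
          ≤ c * (∫ q : ℝ × ℝ, |dS13 v q - dT13 (dT13 v) q| ^ p) ^ (1 / p) := by
  obtain ⟨C, hCt, hC⟩ := strongType hp1
  have hp0 : 0 < p := by linarith
  have hκ := integral_kPsi_pos
  set κ := ∫ x, kPsi x with hκd
  set C₁ : ℝ := (C ^ (1 / p)).toReal with hC₁
  have hCt' : C ^ (1 / p) ≠ ∞ := ENNReal.rpow_ne_top_of_nonneg (by positivity) hCt.ne
  refine ⟨1 + 2 * (C₁ / κ), by positivity, fun v hv hc => ?_⟩
  obtain ⟨a1, a2⟩ := dS13_smooth hv hc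
  obtain ⟨b1, b2⟩ := dT13_smooth hv hc
  obtain ⟨c1, c2⟩ := dT13_smooth b1 b2
  obtain ⟨l1, l2⟩ := heatOp_continuous hv hc
  set P := ENNReal.ofReal p with hP
  have hP0 : P ≠ 0 := by simpa [hP] using hp0
  have hPt : P ≠ ∞ := ENNReal.ofReal_ne_top
  have hPr : P.toReal = p := ENNReal.toReal_ofReal hp0.le
  have hP1 : 1 ≤ P := by rw [hP, ENNReal.one_le_ofReal]; exact hp1.le
  have mL : MemLp (heatOp v) P := l1.memLp_of_hasCompactSupport l2
  have mT : MemLp (dT13 (dT13 v)) P := c1.continuous.memLp_of_hasCompactSupport c2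
  have eL : (∫ q : ℝ × ℝ, |dS13 v q - dT13 (dT13 v) q| ^ p) ^ (1 / p)
      = (eLpNorm (heatOp v) P volume).toReal := integral_rpow_eq_eLpNorm hp1 l1 l2
  rw [eL, integral_rpow_eq_eLpNorm hp1 a1.continuous a2,
    integral_rpow_eq_eLpNorm hp1 c1.continuous c2]
  have h1 : κ * (eLpNorm (dT13 (dT13 v)) P volume).toReal
      ≤ C₁ * (eLpNorm (heatOp v) P volume).toReal := by
    have h := ENNReal.rpow_le_rpow (lintegral_dTT_le hp1 hC hv hc)
      (show 0 ≤ 1 / p by positivity)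
    rw [ENNReal.mul_rpow_of_nonneg _ _ (by positivity)] at h
    have h' : eLpNorm (κ • dT13 (dT13 v)) P volume
        ≤ C ^ (1 / p) * eLpNorm (heatOp v) P volume := by
      rw [eLpNorm_eq_lintegral_rpow_enorm_toReal hP0 hPt,
        eLpNorm_eq_lintegral_rpow_enorm_toReal hP0 hPt, hPr]
      exact h
    rw [eLpNorm_const_smul] at h'
    have h'' := ENNReal.toReal_mono (ENNReal.mul_ne_top hCt' mL.2.ne) h'
    rw [ENNReal.toReal_mul, ENNReal.toReal_mul, toReal_enorm, Real.norm_eq_abs,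
      abs_of_pos hκ] at h''
    exact h''
  have h2 : (eLpNorm (dS13 v) P volume).toReal
      ≤ (eLpNorm (heatOp v) P volume).toReal + (eLpNorm (dT13 (dT13 v)) P volume).toReal := by
    rw [← ENNReal.toReal_add mL.2.ne mT.2.ne]
    refine ENNReal.toReal_mono (ENNReal.add_ne_top.2 ⟨mL.2.ne, mT.2.ne⟩) ?_
    have e : dS13 v = heatOp v + dT13 (dT13 v) := by
      funext x; simp [heatOp]
    nth_rewrite 1 [e]
    exact eLpNorm_add_le mL.1 mT.1 hP1
  have h3 : (eLpNorm (dT13 (dT13 v)) P volume).toReal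
      ≤ C₁ / κ * (eLpNorm (heatOp v) P volume).toReal := by
    rw [div_mul_eq_mul_div, le_div_iff₀ hκ, mul_comm]; exact h1
  linarith
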